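/- arXiv:quant-ph/0607074 — 3 statements merged into one kernel-verified Lean document; each statement's English description precedes it below -/
import Mathlib

section
/- Fix an integer s ≥ 1. For all integers n ≥ 0 and all 0 ≤ j ≤ i ≤ n, the number of pairs (c, E), where c : Fin n → Bool is a choice with exactly i indices k satisfying c k = false and E is a noncrossing contraction with exactly j edges of the word of (a + (a†)^s)^n associated to c, satisfies (n+1) · #{such pairs} = C(n+1, j+1) · C(n−j, n−i) · C(s(n−i), j), where C denotes the binomial coefficient. -/
/-- Two edges `(i,j)` and `(p,q)` cross if `i < p < j < q` or `p < i < q < j`. -/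
def Crosses {N : ℕ} (e f : Fin N × Fin N) : Prop :=
  (e.1 < f.1 ∧ f.1 < e.2 ∧ e.2 < f.2) ∨ (f.1 < e.1 ∧ e.1 < f.2 ∧ f.2 < e.2)

/-- A contraction of the word `w`: a set of edges `(i,j)` with `i < j`, `w i = false` (an `a`),
`w j = true` (an `a†`), whose endpoints are pairwise distinct. -/
def IsContraction {N : ℕ} (w : Fin N → Bool) (E : Finset (Fin N × Fin N)) : Prop :=
  (∀ e ∈ E, e.1 < e.2 ∧ w e.1 = false ∧ w e.2 = true) ∧
  (∀ e ∈ E, ∀ f ∈ E, e ≠ f → e.1 ≠ f.1 ∧ e.1 ≠ f.2 ∧ e.2 ≠ f.1 ∧ e.2 ≠ f.2)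

/-- A set of edges is noncrossing if no two of its edges cross. -/
def IsNoncrossing {N : ℕ} (E : Finset (Fin N × Fin N)) : Prop :=
  ∀ e ∈ E, ∀ f ∈ E, ¬ Crosses e f

/-- The number of noncrossing contractions of `w` with exactly `m` edges. -/
noncomputable def ncCount {N : ℕ} (w : Fin N → Bool) (m : ℕ) : ℕ :=
  Nat.card {E : Finset (Fin N × Fin N) //
    IsContraction w E ∧ IsNoncrossing E ∧ E.card = m}

/-- The word of `(a + (a†)^s)^n` associated to a choice `c : Fin n → Bool`: block `k` consists of
the single letter `a` (`false`) if `c k = false`, and of `s` copies of `a†` (`true`) otherwise. -/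
def wordChoiceAS (s : ℕ) {n : ℕ} (c : Fin n → Bool) : List Bool :=
  (List.ofFn c).flatMap (fun b => if b then List.replicate s true else [false])

/-- The number of pairs `(c, E)` where `c` is a choice for `(a + (a†)^s)^n` with exactly `i`
indices `k` satisfying `c k = false`, and `E` is a noncrossing contraction of the associated
word with exactly `j` edges. -/
noncomputable def pairCountAS (s n j i : ℕ) : ℕ :=
  Nat.card {p : Σ c : Fin n → Bool,
      Finset (Fin (wordChoiceAS s c).length × Fin (wordChoiceAS s c).length) //
    (Finset.univ.filter (fun k => p.1 k = false)).card = i ∧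
    IsContraction (wordChoiceAS s p.1).get p.2 ∧ IsNoncrossing p.2 ∧ p.2.card = j}

/-- The number of ways to pick disjoint subsets of sizes `k` and `m` in a set of size `n`. -/
def trinomialCoeff (n k m : ℕ) : ℕ := n.choose k * (n - k).choose m

theorem succ_mul_trinomialCoeff_left (n k m : ℕ) :
    (n + 1) * trinomialCoeff n k m = (k + 1) * trinomialCoeff (n + 1) (k + 1) m := by
  unfold trinomialCoeff
  rw [Nat.add_sub_add_right, ← mul_assoc, Nat.add_one_mul_choose_eq]
  ring

theorem succ_mul_trinomialCoeff (n k m : ℕ) :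
    (n + 1) * trinomialCoeff n k m =
      (n + 1).choose k * ((n + 1 - k) * (n - k).choose m) := by
  unfold trinomialCoeff
  rw [← mul_assoc, mul_comm (n + 1), Nat.choose_mul_succ_eq]
  ring

theorem succ_mul_trinomialCoeff_mid (n k m : ℕ) :
    (n + 1) * trinomialCoeff n k m = (m + 1) * trinomialCoeff (n + 1) k (m + 1) := by
  rw [succ_mul_trinomialCoeff]
  unfold trinomialCoeff
  rcases le_or_gt k n with h | h
  · rw [Nat.sub_add_comm h, Nat.add_one_mul_choose_eq]
    ring
  · have : n + 1 - k = 0 := by omega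
    simp [this]

theorem Nat.cast_sub_mul_choose_succ (n m : ℕ) :
    ((n : ℤ) + 1 - m) * (n + 1).choose m = (n + 1) * n.choose m := by
  rcases le_or_gt m (n + 1) with h | h
  · have := Nat.choose_mul_succ_eq n m
    zify [h] at this
    linarith
  · simp [Nat.choose_eq_zero_of_lt h, Nat.choose_eq_zero_of_lt (Nat.lt_of_succ_lt h)]

theorem succ_mul_trinomialCoeff_right (n k m : ℕ) :
    ((n : ℤ) + 1) * trinomialCoeff n k m =
      ((n : ℤ) + 1 - k - m) * trinomialCoeff (n + 1) k m := by
  have h₁ := Nat.cast_sub_mul_choose_succ n k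
  unfold trinomialCoeff
  push_cast
  rcases le_or_gt k n with h | h
  · have h₂ := Nat.cast_sub_mul_choose_succ (n - k) m
    rw [Nat.sub_add_comm h]
    push_cast [h] at h₂
    linear_combination (-((n - k).choose m : ℤ)) * h₁ - ((n + 1).choose k : ℤ) * h₂
  · rw [Nat.choose_eq_zero_of_lt h]
    rcases Nat.lt_or_ge (n + 1) k with h' | h'
    · simp [Nat.choose_eq_zero_of_lt h']
    · obtain rfl : k = n + 1 := by omega
      cases m <;> simp

theorem sum_antidiagonal_add_mul_choose_mul_choose (s m h d : ℕ) :
    ∑ p ∈ Finset.HasAntidiagonal.antidiagonal d,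
        (m + 1) * ((h + p.1 + 1) * (s.choose p.1 * (s * m).choose p.2)) =
      ((h + 1) * (m + 1) + d) * (s * (m + 1)).choose d := by
  have h₁ : ∀ d, ∑ p ∈ Finset.HasAntidiagonal.antidiagonal d, s.choose p.1 * (s * m).choose p.2 =
      (s * (m + 1)).choose d := fun d => by
    rw [mul_add_one, add_comm, Nat.add_choose_eq]
  have h₂ : (m + 1) * ∑ p ∈ Finset.HasAntidiagonal.antidiagonal d,
      p.1 * (s.choose p.1 * (s * m).choose p.2) =
      d * (s * (m + 1)).choose d := by
    cases d with
    | zero => simp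
    | succ d =>
      rcases s with _ | s
      · simp [Finset.Nat.sum_antidiagonal_succ]
      rw [Finset.Nat.sum_antidiagonal_succ]
      have h₃ : ∀ p : ℕ × ℕ, (p.1 + 1) * ((s + 1).choose (p.1 + 1) * ((s + 1) * m).choose p.2) =
          (s + 1) * (s.choose p.1 * ((s + 1) * m).choose p.2) := fun p => by
        rw [← mul_assoc, ← mul_assoc, Nat.add_one_mul_choose_eq, mul_comm (p.1 + 1)]
      simp only [h₃, zero_mul, zero_add]
      rw [← Finset.mul_sum, ← Nat.add_choose_eq]
      have h₄ := Nat.add_one_mul_choose_eq (s + (s + 1) * m) d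
      rw [show s + (s + 1) * m + 1 = (s + 1) * (m + 1) by ring] at h₄
      linarith
  have h₅ : ∀ p : ℕ × ℕ, (m + 1) * ((h + p.1 + 1) * (s.choose p.1 * (s * m).choose p.2)) =
      (m + 1) * (h + 1) * (s.choose p.1 * (s * m).choose p.2) +
        (m + 1) * (p.1 * (s.choose p.1 * (s * m).choose p.2)) := fun p => by ring
  simp only [h₅]
  rw [Finset.sum_add_distrib, ← Finset.mul_sum, ← Finset.mul_sum, h₁, h₂]
  ring

theorem IsContraction.subset_of_image_eq {N : ℕ} {w : Fin N → Bool}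
    {E F : Finset (Fin N × Fin N)} (hE : IsContraction w E) (hF : IsContraction w F)
    (hE' : IsNoncrossing E) (hF' : IsNoncrossing F)
    (h₁ : E.image Prod.fst = F.image Prod.fst) (h₂ : E.image Prod.snd = F.image Prod.snd) :
    E ⊆ F := by
  have key : ∀ b a, (a, b) ∈ E → (a, b) ∈ F := by
    intro b
    induction b using WellFoundedLT.induction with
    | _ b ih =>
    intro a hab
    have hlt := (hE.1 _ hab).1
    obtain ⟨a', ha'⟩ : ∃ a', (a', b) ∈ F := by
      have : b ∈ F.image Prod.snd := h₂ ▸ Finset.mem_image_of_mem Prod.snd hab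
      simpa using this
    have hlt' := (hF.1 _ ha').1
    rcases lt_trichotomy a a' with h | h | h
    · obtain ⟨c, hc⟩ : ∃ c, (a', c) ∈ E := by
        have : a' ∈ E.image Prod.fst := h₁ ▸ Finset.mem_image_of_mem Prod.fst ha'
        simpa using this
      rcases lt_trichotomy c b with h' | h' | h'
      · have := hF.2 _ (ih c h' a' hc) _ ha' (by simp [h'.ne])
        simp at this
      · subst h'
        have := hE.2 _ hab _ hc (by simp [h.ne])
        simp at this
      · exact absurd (Or.inl ⟨h, hlt', h'⟩) (hE' _ hab _ hc)
    · exact h ▸ ha'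
    · obtain ⟨c, hc⟩ : ∃ c, (a, c) ∈ F := by
        have : a ∈ F.image Prod.fst := h₁ ▸ Finset.mem_image_of_mem Prod.fst hab
        simpa using this
      rcases lt_trichotomy c b with h' | h' | h'
      · obtain ⟨d, hd⟩ : ∃ d, (d, c) ∈ E := by
          have : c ∈ E.image Prod.snd := h₂ ▸ Finset.mem_image_of_mem Prod.snd hc
          simpa using this
        have hd' := ih c h' d hd
        by_cases hda : d = a
        · subst hda
          have := hE.2 _ hd _ hab (by simp [h'.ne])
          simp at this
        · have := hF.2 _ hd' _ hc (by simp [hda])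
          simp at this
      · exact h' ▸ hc
      · exact absurd (Or.inl ⟨h, hlt, h'⟩) (hF' _ ha' _ hc)
  exact fun e he => key e.2 e.1 he

theorem exists_noncrossing_contraction {N : ℕ} {w : Fin N → Bool} {A B : Finset (Fin N)}
    (hA : ∀ x ∈ A, w x = false) (hB : ∀ x ∈ B, w x = true) (hcard : A.card = B.card)
    (hballot : ∀ t ≤ N, (B.filter (fun x : Fin N => (x : ℕ) < t)).card ≤
      (A.filter (fun x : Fin N => (x : ℕ) < t)).card) :
    ∃ E, IsContraction w E ∧ IsNoncrossing E ∧ E.image Prod.fst = A ∧ E.image Prod.snd = B := by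
  induction hn : B.card generalizing A B with
  | zero =>
    rw [hn, Finset.card_eq_zero] at hcard
    rw [Finset.card_eq_zero] at hn
    exact ⟨∅, by simp [IsContraction], by simp [IsNoncrossing], by simp [hcard], by simp [hn]⟩
  | succ n ih =>
    have hBne : B.Nonempty := Finset.card_pos.1 (by omega)
    obtain ⟨b, hb, hbmin⟩ := B.exists_minimal hBne
    replace hbmin : ∀ x ∈ B, b ≤ x := fun x hx => by
      by_contra h
      exact h (hbmin hx (le_of_not_ge h))
    have hCne : (A.filter (fun x : Fin N => (x : ℕ) < b + 1)).Nonempty := by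
      refine Finset.card_pos.1 (lt_of_lt_of_le ?_ (hballot (b + 1) b.isLt))
      exact Finset.card_pos.2 ⟨b, by simp [hb]⟩
    obtain ⟨a, ha, hamax⟩ := Finset.exists_maximal hCne
    rw [Finset.mem_filter] at ha
    obtain ⟨haA, hab⟩ := ha
    replace hab : a < b := lt_of_le_of_ne (Nat.lt_succ_iff.1 hab) fun h => by
      have := hA a haA
      simp [h, hB b hb] at this
    replace hamax : ∀ x ∈ A, x < b → x ≤ a := fun x hx hxb => by
      by_contra h
      exact h (hamax (Finset.mem_filter.2 ⟨hx, Nat.lt_succ_of_lt hxb⟩) (le_of_not_ge h))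
    obtain ⟨E, hE, hE', hEA, hEB⟩ := ih (A := A.erase a) (B := B.erase b)
      (fun x hx => hA x (Finset.mem_of_mem_erase hx))
      (fun x hx => hB x (Finset.mem_of_mem_erase hx))
      (by rw [Finset.card_erase_of_mem haA, Finset.card_erase_of_mem hb, hcard])
      (fun t ht => by
        rw [Finset.filter_erase, Finset.filter_erase]
        by_cases h : (b : ℕ) < t
        · have h' : (a : ℕ) < t := lt_trans hab h
          rw [Finset.card_erase_of_mem (by simp [hb, h]),
            Finset.card_erase_of_mem (by simp [haA, h'])]
          exact Nat.sub_le_sub_right (hballot t ht) 1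
        · have : B.filter (fun x : Fin N => (x : ℕ) < t) = ∅ := by
            refine Finset.filter_eq_empty_iff.2 fun x hx hxt => h ?_
            exact lt_of_le_of_lt (hbmin x hx) hxt
          simp [this])
      (by rw [Finset.card_erase_of_mem hb, hn]; rfl)
    have hfst : ∀ e ∈ E, e.1 ∈ A ∧ e.1 ≠ a := fun e he => by
      have : e.1 ∈ A.erase a := hEA ▸ Finset.mem_image_of_mem Prod.fst he
      simpa [and_comm] using this
    have hsnd : ∀ e ∈ E, e.2 ∈ B ∧ e.2 ≠ b := fun e he => by
      have : e.2 ∈ B.erase b := hEB ▸ Finset.mem_image_of_mem Prod.snd he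
      simpa [and_comm] using this
    have hne : ∀ x ∈ A, ∀ y ∈ B, x ≠ y := fun x hx y hy h => by
      have := hA x hx
      simp [h, hB y hy] at this
    refine ⟨insert (a, b) E, ⟨?_, ?_⟩, ?_, ?_, ?_⟩
    · intro e he
      rcases Finset.mem_insert.1 he with rfl | he
      · exact ⟨hab, hA a haA, hB b hb⟩
      · exact hE.1 e he
    · intro e he f hf hef
      rcases Finset.mem_insert.1 he with rfl | he <;> rcases Finset.mem_insert.1 hf with rfl | hf
      · exact absurd rfl hef
      · exact ⟨(hfst f hf).2.symm, hne _ haA _ (hsnd f hf).1, (hne _ (hfst f hf).1 _ hb).symm,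
          (hsnd f hf).2.symm⟩
      · exact ⟨(hfst e he).2, hne _ (hfst e he).1 _ hb, (hne _ haA _ (hsnd e he).1).symm,
          (hsnd e he).2⟩
      · exact hE.2 e he f hf hef
    · have hcross : ∀ e ∈ E, ¬ (a < e.1 ∧ e.1 < b) ∧ ¬ e.2 < b := fun e he =>
        ⟨fun h => absurd (hamax _ (hfst e he).1 h.2) (not_le.2 h.1),
          not_lt.2 (hbmin _ (hsnd e he).1)⟩
      intro e he f hf
      rcases Finset.mem_insert.1 he with rfl | he <;> rcases Finset.mem_insert.1 hf with rfl | hf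
      · simp [Crosses]
      · rintro (h | h)
        · exact (hcross f hf).1 ⟨h.1, h.2.1⟩
        · exact (hcross f hf).2 h.2.2
      · rintro (h | h)
        · exact (hcross e he).2 h.2.2
        · exact (hcross e he).1 ⟨h.1, h.2.1⟩
      · exact hE' e he f hf
    · rw [Finset.image_insert, hEA, Finset.insert_erase haA]
    · rw [Finset.image_insert, hEB, Finset.insert_erase hb]

/-- The number of ways to mark letters of a word, given in reversed order, so that every prefix of
the word has at least as many marked `a` as marked `a†`, while the whole word has exactly `d` marked
`a†` and `h + d` marked `a`. -/
def ballotCount : List Bool → ℕ → ℕ → ℕ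
  | [], 0, 0 => 1
  | [], _, _ => 0
  | false :: v, 0, d => ballotCount v 0 d
  | false :: v, h + 1, d => ballotCount v (h + 1) d + ballotCount v h d
  | true :: v, h, 0 => ballotCount v h 0
  | true :: v, h, d + 1 => ballotCount v h (d + 1) + ballotCount v (h + 1) d

theorem ballotCount_replicate_true_append (s : ℕ) (v : List Bool) (h d : ℕ) :
    ballotCount (List.replicate s true ++ v) h d =
      ∑ p ∈ Finset.HasAntidiagonal.antidiagonal d, s.choose p.1 * ballotCount v (h + p.1) p.2 := by
  induction s generalizing h d with
  | zero =>
    cases d with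
    | zero => simp
    | succ d => simp [Finset.Nat.sum_antidiagonal_succ]
  | succ s ih =>
    rw [List.replicate_succ, List.cons_append]
    cases d with
    | zero => simp [ballotCount, ih]
    | succ d =>
      rw [ballotCount, ih, ih, Finset.Nat.sum_antidiagonal_succ, Finset.Nat.sum_antidiagonal_succ,
        add_assoc, ← Finset.sum_add_distrib]
      congr 1
      · simp
      · refine Finset.sum_congr rfl fun p _ => ?_
        rw [Nat.choose_succ_succ, add_mul, add_comm, add_assoc h, add_comm 1]

theorem wordChoiceAS_snoc (s : ℕ) {n : ℕ} (c : Fin n → Bool) (b : Bool) :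
    wordChoiceAS s (Fin.snoc c b : Fin (n + 1) → Bool) =
      wordChoiceAS s c ++ if b then List.replicate s true else [false] := by
  rw [wordChoiceAS, List.ofFn_succ_last, List.flatMap_append]
  simp [wordChoiceAS]

theorem Fin.sum_snoc_bool {n : ℕ} (f : (Fin (n + 1) → Bool) → ℕ) :
    ∑ c, f c = (∑ c : Fin n → Bool, f (Fin.snoc c false : Fin (n + 1) → Bool)) +
      ∑ c : Fin n → Bool, f (Fin.snoc c true : Fin (n + 1) → Bool) := by
  rw [← (Fin.snocEquiv fun _ => Bool).sum_comp, Fintype.sum_prod_type, Fintype.sum_bool, add_comm]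
  rfl

theorem card_filter_snoc_eq_true {n : ℕ} (c : Fin n → Bool) (b : Bool) :
    (Finset.univ.filter
      (fun k => (Fin.snoc c b : Fin (n + 1) → Bool) k = true)).card =
      (Finset.univ.filter (fun k => c k = true)).card + if b then 1 else 0 := by
  simp only [Finset.card_filter, Fin.sum_univ_castSucc, Fin.snoc_castSucc, Fin.snoc_last]

/-- The sum of `ballotCount` over the words of the choices with exactly `m` blocks `(a†)^s`. -/
def choiceBallotCount (s n m h d : ℕ) : ℕ :=
  ∑ c : Fin n → Bool, if (Finset.univ.filter (fun k => c k = true)).card = m then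
    ballotCount (wordChoiceAS s c).reverse h d else 0

theorem choiceBallotCount_succ (s n m h d : ℕ) :
    choiceBallotCount s (n + 1) m h d =
      choiceBallotCount s n m h d +
      (if h = 0 then 0 else choiceBallotCount s n m (h - 1) d) +
      if m = 0 then 0 else ∑ p ∈ Finset.HasAntidiagonal.antidiagonal d,
        s.choose p.1 * choiceBallotCount s n (m - 1) (h + p.1) p.2 := by
  rw [choiceBallotCount, Fin.sum_snoc_bool]
  simp only [card_filter_snoc_eq_true, wordChoiceAS_snoc, List.reverse_append, if_true,
    Bool.false_eq_true, if_false, List.reverse_replicate, List.reverse_singleton, add_zero,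
    ballotCount_replicate_true_append]
  congr 1
  · cases h with
    | zero => simp [choiceBallotCount, ballotCount]
    | succ h =>
      simp [choiceBallotCount, ballotCount, ← Finset.sum_add_distrib, ite_add_ite]
  · cases m with
    | zero => simp
    | succ m =>
      simp only [choiceBallotCount, add_left_inj, Nat.add_eq_zero_iff, one_ne_zero, and_false,
        if_false, Nat.add_sub_cancel, Finset.mul_sum]
      rw [Finset.sum_comm]
      refine Finset.sum_congr rfl fun c _ => ?_
      split_ifs <;> simp

theorem succ_mul_choiceBallotCount (s n m h d : ℕ) :
    (n + 1) * choiceBallotCount s n m h d =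
      (h + 1) * trinomialCoeff (n + 1) (h + d + 1) m * (s * m).choose d := by
  induction n generalizing m h d with
  | zero =>
    rcases m with _ | m <;> rcases h with _ | h <;> rcases d with _ | d <;>
      simp [choiceBallotCount, wordChoiceAS, ballotCount, trinomialCoeff]
    exact Nat.choose_eq_zero_of_lt (by omega)
  | succ n ih =>
    have h₁ : (n + 2) * ((n + 1) * choiceBallotCount s n m h d) =
        (n + 2) * ((h + 1) * trinomialCoeff (n + 1) (h + d + 1) m * (s * m).choose d) := by rw [ih]
    have h₂ : (n + 2) * ((n + 1) * if h = 0 then 0 else choiceBallotCount s n m (h - 1) d) =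
        h * (h + d + 1) * trinomialCoeff (n + 2) (h + d + 1) m * (s * m).choose d := by
      rcases h with _ | h
      · simp
      · rw [if_neg (by omega), Nat.add_sub_cancel, ih]
        have := succ_mul_trinomialCoeff_left (n + 1) (h + d + 1) m
        rw [show h + 1 + d + 1 = h + d + 1 + 1 by ring]
        linear_combination (h + 1) * (s * m).choose d * this
    have h₃ : (n + 2) * ((n + 1) * if m = 0 then 0 else
        ∑ p ∈ Finset.HasAntidiagonal.antidiagonal d,
          s.choose p.1 * choiceBallotCount s n (m - 1) (h + p.1) p.2) =
        trinomialCoeff (n + 2) (h + d + 1) m * (((h + 1) * m + d) * (s * m).choose d) := by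
      rcases m with _ | m
      · rcases d with _ | d <;> simp
      · rw [if_neg (by omega), Nat.add_sub_cancel, ← sum_antidiagonal_add_mul_choose_mul_choose,
          Finset.mul_sum, Finset.mul_sum, Finset.mul_sum]
        refine Finset.sum_congr rfl fun p hp => ?_
        have := succ_mul_trinomialCoeff_mid (n + 1) (h + d + 1) m
        have hi := ih m (h + p.1) p.2
        rw [show h + p.1 + p.2 = h + (p.1 + p.2) from add_assoc _ _ _,
          Finset.HasAntidiagonal.mem_antidiagonal.1 hp] at hi
        linear_combination (n + 2) * s.choose p.1 * hi +
          (h + p.1 + 1) * (s.choose p.1 * (s * m).choose p.2) * this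
    have h₄ := succ_mul_trinomialCoeff_right (n + 1) (h + d + 1) m
    refine Nat.eq_of_mul_eq_mul_left n.succ_pos ?_
    rw [choiceBallotCount_succ]
    zify at h₁ h₂ h₃ ⊢
    push_cast at h₄
    linear_combination h₁ + h₂ + h₃ + ((h + 1) * (s * m).choose d : ℤ) * h₄

/-- The number of marked letters equal to `b` among the first `t` letters of `w`. -/
def markedCount {N : ℕ} (w M : Fin N → Bool) (b : Bool) (t : ℕ) : ℕ :=
  (Finset.univ.filter (fun x : Fin N => (M x = true ∧ w x = b) ∧ (x : ℕ) < t)).card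

/-- The marking `M` of `w` has `h + d` marked `a` and `d` marked `a†`, and every prefix has at
least as many marked `a` as marked `a†`. -/
def IsBallot {N : ℕ} (w M : Fin N → Bool) (h d : ℕ) : Prop :=
  markedCount w M false N = h + d ∧ markedCount w M true N = d ∧
    ∀ t ≤ N, markedCount w M true t ≤ markedCount w M false t

theorem markedCount_snoc {N : ℕ} (w : Fin (N + 1) → Bool) (M : Fin N → Bool) (m b : Bool) {t : ℕ}
    (ht : t ≤ N) :
    markedCount w (Fin.snoc M m : Fin (N + 1) → Bool) b t =
      markedCount (fun x => w x.castSucc) M b t := by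
  simp only [markedCount, Finset.card_filter, Fin.sum_univ_castSucc, Fin.snoc_castSucc,
    Fin.snoc_last, Fin.val_castSucc, Fin.val_last, not_lt.2 ht, and_false, if_false, add_zero]

theorem markedCount_snoc_last {N : ℕ} (w : Fin (N + 1) → Bool) (M : Fin N → Bool) (m b : Bool) :
    markedCount w (Fin.snoc M m : Fin (N + 1) → Bool) b (N + 1) =
      markedCount (fun x => w x.castSucc) M b N +
        if m = true ∧ w (Fin.last N) = b then 1 else 0 := by
  simp only [markedCount, Finset.card_filter, Fin.sum_univ_castSucc, Fin.snoc_castSucc,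
    Fin.snoc_last, Fin.is_lt, and_true]

theorem isBallot_snoc_iff {N : ℕ} (w : Fin (N + 1) → Bool) (M : Fin N → Bool) (m : Bool)
    (h d : ℕ) :
    IsBallot w (Fin.snoc M m : Fin (N + 1) → Bool) h d ↔
      markedCount (fun x => w x.castSucc) M false N +
        (if m = true ∧ w (Fin.last N) = false then 1 else 0) = h + d ∧
      markedCount (fun x => w x.castSucc) M true N +
        (if m = true ∧ w (Fin.last N) = true then 1 else 0) = d ∧
      ∀ t ≤ N, markedCount (fun x => w x.castSucc) M true t ≤
        markedCount (fun x => w x.castSucc) M false t := by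
  unfold IsBallot
  rw [markedCount_snoc_last, markedCount_snoc_last]
  refine and_congr_right fun h₁ => and_congr_right fun h₂ => ⟨fun H t ht => ?_, fun H t ht => ?_⟩
  · have := H t (by omega)
    rwa [markedCount_snoc _ _ _ _ ht, markedCount_snoc _ _ _ _ ht] at this
  · rcases Nat.lt_or_ge N t with h' | h'
    · obtain rfl : t = N + 1 := by omega
      rw [markedCount_snoc_last, markedCount_snoc_last]
      omega
    · rw [markedCount_snoc _ _ _ _ h', markedCount_snoc _ _ _ _ h']
      exact H t h'

theorem Nat.card_subtype_snoc_bool {N : ℕ} (P : (Fin (N + 1) → Bool) → Prop) :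
    Nat.card {M // P M} =
      Nat.card {M : Fin N → Bool // P (Fin.snoc M false : Fin (N + 1) → Bool)} +
      Nat.card {M : Fin N → Bool // P (Fin.snoc M true : Fin (N + 1) → Bool)} := by
  classical
  simp only [Nat.card_eq_fintype_card, Fintype.card_subtype, Finset.card_filter]
  rw [← (Fin.snocEquiv fun _ => Bool).sum_comp, Fintype.sum_prod_type, Fintype.sum_bool, add_comm]
  rfl

theorem card_isBallot {N : ℕ} (w : Fin N → Bool) (h d : ℕ) :
    Nat.card {M : Fin N → Bool // IsBallot w M h d} = ballotCount (List.ofFn w).reverse h d := by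
  induction N generalizing h d with
  | zero =>
    have : ∀ M, IsBallot w M h d ↔ h = 0 ∧ d = 0 := fun M => by
      simp [IsBallot, markedCount]
      omega
    simp only [this]
    rcases h with _ | h <;> rcases d with _ | d <;> simp [ballotCount]
  | succ N ih =>
    have hcongr : ∀ (P Q : (Fin N → Bool) → Prop), (∀ M, P M ↔ Q M) →
        Nat.card {M // P M} = Nat.card {M // Q M} :=
      fun P Q H => Nat.card_congr (Equiv.subtypeEquivRight H)
    have hempty : ∀ (P : (Fin N → Bool) → Prop), (∀ M, ¬ P M) → Nat.card {M // P M} = 0 :=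
      fun P H => by
        have : IsEmpty {M // P M} := ⟨fun M => H M.1 M.2⟩
        exact Nat.card_of_isEmpty
    rw [Nat.card_subtype_snoc_bool, List.ofFn_succ_last, List.reverse_append,
      hcongr _ (fun M => IsBallot (fun x => w x.castSucc) M h d)
        (fun M => by rw [isBallot_snoc_iff]; simp [IsBallot]), ih]
    rcases hw : w (Fin.last N) with _ | _
    · rcases h with _ | h
      · rw [hempty]
        · simp [ballotCount]
        · intro M hM
          rw [isBallot_snoc_iff] at hM
          have := hM.2.2 N le_rfl
          simp [hw] at hM
          omega
      · rw [hcongr _ (fun M => IsBallot (fun x => w x.castSucc) M h d), ih]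
        · simp [ballotCount]
        · intro M
          rw [isBallot_snoc_iff, IsBallot]
          simp [hw]
          omega
    · rcases d with _ | d
      · rw [hempty]
        · simp [ballotCount]
        · intro M hM
          rw [isBallot_snoc_iff] at hM
          simp [hw] at hM
      · rw [hcongr _ (fun M => IsBallot (fun x => w x.castSucc) M (h + 1) d), ih]
        · simp [ballotCount]
        · intro M
          rw [isBallot_snoc_iff, IsBallot]
          simp [hw]
          omega

/-- The marking of the endpoints of the edges of `E`. -/
def endpointMarking {N : ℕ} (E : Finset (Fin N × Fin N)) (x : Fin N) : Bool :=
  decide (x ∈ E.image Prod.fst ∪ E.image Prod.snd)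

theorem IsContraction.endpointMarking_false {N : ℕ} {w : Fin N → Bool}
    {E : Finset (Fin N × Fin N)} (hE : IsContraction w E) :
    Finset.univ.filter (fun x => endpointMarking E x = true ∧ w x = false) =
      E.image Prod.fst := by
  ext x
  simp only [endpointMarking, Finset.mem_filter, Finset.mem_univ, true_and, decide_eq_true_eq,
    Finset.mem_union]
  refine ⟨fun ⟨hx, hw⟩ => hx.resolve_right fun h => ?_, fun hx => ⟨Or.inl hx, ?_⟩⟩
  · obtain ⟨e, he, rfl⟩ := Finset.mem_image.1 h
    simp [(hE.1 e he).2.2] at hw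
  · obtain ⟨e, he, rfl⟩ := Finset.mem_image.1 hx
    exact (hE.1 e he).2.1

theorem IsContraction.endpointMarking_true {N : ℕ} {w : Fin N → Bool}
    {E : Finset (Fin N × Fin N)} (hE : IsContraction w E) :
    Finset.univ.filter (fun x => endpointMarking E x = true ∧ w x = true) =
      E.image Prod.snd := by
  ext x
  simp only [endpointMarking, Finset.mem_filter, Finset.mem_univ, true_and, decide_eq_true_eq,
    Finset.mem_union]
  refine ⟨fun ⟨hx, hw⟩ => hx.resolve_left fun h => ?_, fun hx => ⟨Or.inr hx, ?_⟩⟩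
  · obtain ⟨e, he, rfl⟩ := Finset.mem_image.1 h
    simp [(hE.1 e he).2.1] at hw
  · obtain ⟨e, he, rfl⟩ := Finset.mem_image.1 hx
    exact (hE.1 e he).2.2

theorem IsContraction.injOn_fst {N : ℕ} {w : Fin N → Bool} {E : Finset (Fin N × Fin N)}
    (hE : IsContraction w E) : Set.InjOn Prod.fst (E : Set (Fin N × Fin N)) :=
  fun e he f hf h => by_contra fun hef => (hE.2 e he f hf hef).1 h

theorem IsContraction.injOn_snd {N : ℕ} {w : Fin N → Bool} {E : Finset (Fin N × Fin N)}
    (hE : IsContraction w E) : Set.InjOn Prod.snd (E : Set (Fin N × Fin N)) :=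
  fun e he f hf h => by_contra fun hef => (hE.2 e he f hf hef).2.2.2 h

theorem markedCount_eq_card_filter {N : ℕ} (w M : Fin N → Bool) (b : Bool) (t : ℕ) :
    markedCount w M b t =
      ((Finset.univ.filter (fun x => M x = true ∧ w x = b)).filter
        (fun x : Fin N => (x : ℕ) < t)).card := by
  rw [markedCount, Finset.filter_filter]

theorem markedCount_length {N : ℕ} (w M : Fin N → Bool) (b : Bool) :
    markedCount w M b N = (Finset.univ.filter (fun x => M x = true ∧ w x = b)).card := by
  simp [markedCount]

theorem IsContraction.isBallot_endpointMarking {N : ℕ} {w : Fin N → Bool}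
    {E : Finset (Fin N × Fin N)} (hE : IsContraction w E) :
    IsBallot w (endpointMarking E) 0 E.card := by
  refine ⟨?_, ?_, fun t _ => ?_⟩
  · rw [markedCount_length, hE.endpointMarking_false, Finset.card_image_of_injOn hE.injOn_fst,
      zero_add]
  · rw [markedCount_length, hE.endpointMarking_true, Finset.card_image_of_injOn hE.injOn_snd]
  · rw [markedCount_eq_card_filter, markedCount_eq_card_filter, hE.endpointMarking_true,
      hE.endpointMarking_false, Finset.filter_image, Finset.filter_image,
      Finset.card_image_of_injOn (hE.injOn_snd.mono (Finset.filter_subset _ _)),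
      Finset.card_image_of_injOn (hE.injOn_fst.mono (Finset.filter_subset _ _))]
    refine Finset.card_le_card fun e he => ?_
    rw [Finset.mem_filter] at he ⊢
    exact ⟨he.1, lt_trans (hE.1 e he.1).1 he.2⟩

theorem ncCount_eq_ballotCount {N : ℕ} (w : Fin N → Bool) (m : ℕ) :
    ncCount w m = ballotCount (List.ofFn w).reverse 0 m := by
  rw [← card_isBallot]
  refine Nat.card_congr (Equiv.ofBijective
    (fun E => ⟨endpointMarking E.1, by
      have := E.2.1.isBallot_endpointMarking
      rwa [E.2.2.2] at this⟩) ⟨?_, ?_⟩)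
  · rintro ⟨E, hE, hE', rfl⟩ ⟨F, hF, hF', hcard⟩ h
    have hEF : endpointMarking E = endpointMarking F := congrArg Subtype.val h
    have h₁ : E.image Prod.fst = F.image Prod.fst := by
      rw [← hE.endpointMarking_false, ← hF.endpointMarking_false, hEF]
    have h₂ : E.image Prod.snd = F.image Prod.snd := by
      rw [← hE.endpointMarking_true, ← hF.endpointMarking_true, hEF]
    exact Subtype.ext (Finset.Subset.antisymm (hE.subset_of_image_eq hF hE' hF' h₁ h₂)
      (hF.subset_of_image_eq hE hF' hE' h₁.symm h₂.symm))
  · rintro ⟨M, hM₁, hM₂, hM⟩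
    simp only [markedCount_eq_card_filter] at hM
    rw [markedCount_length] at hM₁ hM₂
    obtain ⟨E, hE, hE', hEA, hEB⟩ := exists_noncrossing_contraction (w := w)
      (A := Finset.univ.filter (fun x => M x = true ∧ w x = false))
      (B := Finset.univ.filter (fun x => M x = true ∧ w x = true))
      (fun x hx => (Finset.mem_filter.1 hx).2.2) (fun x hx => (Finset.mem_filter.1 hx).2.2)
      (by rw [hM₁, hM₂, zero_add]) hM
    refine ⟨⟨E, hE, hE', ?_⟩, Subtype.ext (funext fun x => ?_)⟩
    · rw [← Finset.card_image_of_injOn hE.injOn_snd, hEB, hM₂]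
    · rw [Bool.eq_iff_iff]
      simp only [endpointMarking, hEA, hEB, decide_eq_true_eq, Finset.mem_union,
        Finset.mem_filter, Finset.mem_univ, true_and]
      cases w x <;> simp

theorem pairCountAS_eq_choiceBallotCount (s : ℕ) {n i : ℕ} (hin : i ≤ n) (j : ℕ) :
    pairCountAS s n j i = choiceBallotCount s n (n - i) 0 j := by
  have hfilter : ∀ c : Fin n → Bool, (Finset.univ.filter (fun k => c k = false)).card = i ↔
      (Finset.univ.filter (fun k => c k = true)).card = n - i := fun c => by
    have := Finset.card_filter_add_card_filter_not (s := Finset.univ) (fun k => c k = true)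
    simp at this
    omega
  rw [pairCountAS, Nat.card_congr ((⟨fun p => ⟨p.1.1, p.1.2, p.2⟩, fun q => ⟨⟨q.1, q.2.1⟩, q.2.2⟩,
    fun _ => rfl, fun _ => rfl⟩ : _ ≃ Σ c : Fin n → Bool,
      {E : Finset (Fin (wordChoiceAS s c).length × Fin (wordChoiceAS s c).length) //
        (Finset.univ.filter (fun k => c k = false)).card = i ∧
        IsContraction (wordChoiceAS s c).get E ∧ IsNoncrossing E ∧ E.card = j})), Nat.card_sigma,
    choiceBallotCount]
  refine Finset.sum_congr rfl fun c _ => ?_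
  split_ifs with h
  · simp only [(hfilter c).2 h, true_and]
    exact (ncCount_eq_ballotCount _ j).trans (by rw [List.ofFn_get])
  · simp [hfilter c, h]

theorem stmt7 (s : ℕ) (hs : 1 ≤ s) (n i j : ℕ) (hji : j ≤ i) (hin : i ≤ n) :
    (n + 1) * pairCountAS s n j i
      = Nat.choose (n + 1) (j + 1) * Nat.choose (n - j) (n - i)
          * Nat.choose (s * (n - i)) j := by
  rw [pairCountAS_eq_choiceBallotCount s hin, succ_mul_choiceBallotCount, trinomialCoeff, zero_add,
    zero_add, one_mul, Nat.add_sub_add_right]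
end

section
/- For all integers n ≥ 0 and all 0 ≤ j ≤ i ≤ n−j, the number of pairs (c, E), where c : Fin n → Bool is a choice with exactly i indices k satisfying c k = false and E is a noncrossing contraction with exactly j edges of the word of (a + a†)^n associated to c, equals c_j · C(n, i+j) · C(i+j, 2j), where c_j = C(2j, j)/(j+1) is the j-th Catalan number and C denotes the binomial coefficient. -/
/-- The number of pairs `(c, E)` where `c : Fin n → Bool` is a choice for `(a + a†)^n` (the
associated word has letter `a` at position `k` if `c k = false` and `a†` otherwise) with
exactly `i` indices `k` satisfying `c k = false`, and `E` is a noncrossing contraction of the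
associated word with exactly `j` edges. -/
noncomputable def pairCountAA (n j i : ℕ) : ℕ :=
  Nat.card {p : (Fin n → Bool) × Finset (Fin n × Fin n) //
    (Finset.univ.filter (fun k => p.1 k = false)).card = i ∧
    IsContraction p.1 p.2 ∧ IsNoncrossing p.2 ∧ p.2.card = j}

/-- The number of noncrossing configurations of `j` edges and `h` uncovered points using all of
`2 * j + h` points (ballot numbers). -/
def ballot : ℕ → ℕ → ℕ
  | 0, _ => 1
  | j + 1, 0 => ballot j 1
  | j + 1, h + 1 => ballot (j + 1) h + ballot j (h + 2)

theorem ballot_add_choose (j h : ℕ) :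
    ballot (j + 1) h + (2 * j + 2 + h).choose j = (2 * j + 2 + h).choose (j + 1) := by
  induction j generalizing h with
  | zero =>
    induction h with
    | zero => simp [ballot]
    | succ h ih => simp [ballot] at ih ⊢; omega
  | succ j ihj =>
    induction h with
    | zero =>
      have h1 := ihj 1
      have h2 := Nat.choose_succ_succ (2 * j + 3) (j + 1)
      have h3 := Nat.choose_succ_succ (2 * j + 3) j
      have h4 : (2 * j + 3).choose (j + 2) = (2 * j + 3).choose (j + 1) :=
        Nat.choose_symm_of_eq_add (by omega)
      simp only [ballot, Nat.succ_eq_add_one] at *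
      ring_nf at *
      omega
    | succ h ih =>
      have h1 := ihj (h + 2)
      have h2 := Nat.choose_succ_succ (2 * j + 4 + h) (j + 1)
      have h3 := Nat.choose_succ_succ (2 * j + 4 + h) j
      simp only [ballot, Nat.succ_eq_add_one] at *
      ring_nf at *
      omega

theorem ballot_zero_right (j : ℕ) : ballot j 0 = catalan j := by
  cases j with
  | zero => simp [ballot]
  | succ j =>
    have h1 := ballot_add_choose j 0
    have h2 := succ_mul_catalan_eq_centralBinom (j + 1)
    have h3 := Nat.choose_succ_right_eq (2 * j + 2) j
    rw [Nat.centralBinom_eq_two_mul_choose, show 2 * (j + 1) = 2 * j + 2 by ring] at h2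
    rw [show 2 * j + 2 - j = j + 2 by omega] at h3
    simp only [Nat.add_zero] at h1
    have h4 : (j + 2) * ballot (j + 1) 0 = (j + 2) * catalan (j + 1) := by
      rw [h2]
      nlinarith
    exact Nat.eq_of_mul_eq_mul_left (by omega) h4

/-- White points, edges and open points of a partially built noncrossing contraction. -/
abbrev Config := Finset ℕ × Finset (ℕ × ℕ) × Finset ℕ

/-- A configuration on `{0, …, n - 1}`: the white points, the edges of a noncrossing contraction,
and open white points that no edge uses or covers. -/
structure IsConfig (n : ℕ) (s : Config) : Prop where
  white_lt : ∀ x ∈ s.1, x < n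
  edge : ∀ e ∈ s.2.1, e.1 < e.2 ∧ e.2 < n ∧ e.1 ∈ s.1 ∧ e.2 ∉ s.1
  inj : ∀ e ∈ s.2.1, ∀ f ∈ s.2.1, e.1 = f.1 ∨ e.2 = f.2 → e = f
  noncrossing : ∀ e ∈ s.2.1, ∀ f ∈ s.2.1, ¬(e.1 < f.1 ∧ f.1 < e.2 ∧ e.2 < f.2)
  open_white : ∀ u ∈ s.2.2, u ∈ s.1
  open_free : ∀ e ∈ s.2.1, ∀ u ∈ s.2.2, ¬(e.1 ≤ u ∧ u < e.2)

/-- Add the unused white point `n`. -/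
def addWhite (n : ℕ) (s : Config) : Config := (insert n s.1, s.2.1, s.2.2)

/-- Add the open white point `n`. -/
def addOpen (n : ℕ) (s : Config) : Config := (insert n s.1, s.2.1, insert n s.2.2)

/-- Add the black point `n` and join it to the last open point. -/
def addClose (n : ℕ) (s : Config) : Config :=
  (s.1, insert (s.2.2.sup id, n) s.2.1, s.2.2.erase (s.2.2.sup id))

theorem sup_id_mem {U : Finset ℕ} (h : U.Nonempty) : U.sup id ∈ U := by
  obtain ⟨x, hx, e⟩ := U.exists_mem_eq_sup h id
  rw [e]; exact hx

/-- All configurations on `{0, …, n - 1}`. -/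
def configs : ℕ → Finset Config
  | 0 => {(∅, ∅, ∅)}
  | n + 1 => (configs n ∪ ((configs n).filter (·.2.2.Nonempty)).image (addClose n)) ∪
      ((configs n).image (addWhite n) ∪ (configs n).image (addOpen n))

theorem IsConfig.succ {n : ℕ} {s : Config} (h : IsConfig n s) : IsConfig (n + 1) s := by
  obtain ⟨h1, h2, h3, h4, h5, h6⟩ := h
  exact ⟨by grind, by grind, h3, h4, h5, h6⟩

theorem IsConfig.addWhite {n : ℕ} {s : Config} (h : IsConfig n s) :
    IsConfig (n + 1) (addWhite n s) := by
  obtain ⟨W, E, U⟩ := s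
  obtain ⟨h1, h2, h3, h4, h5, h6⟩ := h
  constructor <;> simp only [_root_.addWhite] at * <;> grind

theorem IsConfig.addOpen {n : ℕ} {s : Config} (h : IsConfig n s) :
    IsConfig (n + 1) (addOpen n s) := by
  obtain ⟨W, E, U⟩ := s
  obtain ⟨h1, h2, h3, h4, h5, h6⟩ := h
  constructor <;> simp only [_root_.addOpen] at * <;> grind

theorem IsConfig.addClose {n : ℕ} {s : Config} (h : IsConfig n s) (hU : s.2.2.Nonempty) :
    IsConfig (n + 1) (addClose n s) := by
  obtain ⟨W, E, U⟩ := s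
  have hp := sup_id_mem hU
  have hle : ∀ u ∈ U, u ≤ U.sup id := fun u hu => Finset.le_sup (f := id) hu
  obtain ⟨h1, h2, h3, h4, h5, h6⟩ := h
  simp only [_root_.addClose] at *
  generalize U.sup id = p at *
  have hpn := h1 p (h5 p hp)
  constructor
  · grind
  · grind
  · simp only [Finset.mem_insert]
    rintro e (rfl | he) f (rfl | hf) hef
    · rfl
    · have := h6 f hf p hp; have := h2 f hf; grind
    · have := h6 e he p hp; have := h2 e he; grind
    · exact h3 e he f hf hef
  · simp only [Finset.mem_insert]
    rintro e (rfl | he) f (rfl | hf)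
    · simp
    · have := h2 f hf; grind
    · have := h6 e he p hp; grind
    · exact h4 e he f hf
  · grind
  · simp only [Finset.mem_insert, Finset.mem_erase]
    rintro e (rfl | he) u ⟨hu, hu'⟩
    · have := hle u hu'; grind
    · exact h6 e he u hu'

theorem IsConfig.cases_succ {n : ℕ} {s : Config} (h : IsConfig (n + 1) s) :
    IsConfig n s ∨ (∃ t, IsConfig n t ∧ t.2.2.Nonempty ∧ _root_.addClose n t = s) ∨
      (∃ t, IsConfig n t ∧ _root_.addWhite n t = s) ∨
      (∃ t, IsConfig n t ∧ _root_.addOpen n t = s) := by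
  obtain ⟨W, E, U⟩ := s
  obtain ⟨h1, h2, h3, h4, h5, h6⟩ := h
  simp only at h1 h2 h3 h4 h5 h6
  by_cases hW : n ∈ W
  · right; right
    by_cases hU : n ∈ U
    · right
      refine ⟨(W.erase n, E, U.erase n), ?_, by
        simp [_root_.addOpen, Finset.insert_erase hW, Finset.insert_erase hU]⟩
      constructor <;> simp only [Finset.mem_erase] <;> grind
    · left
      refine ⟨(W.erase n, E, U), ?_, by simp [_root_.addWhite, Finset.insert_erase hW]⟩
      constructor <;> simp only [Finset.mem_erase] <;> grind
  · by_cases hE : ∃ p, (p, n) ∈ E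
    · obtain ⟨p, hp⟩ := hE
      right; left
      have hpW := h2 _ hp
      have hpU : p ∉ U := fun hu => h6 _ hp p hu ⟨le_rfl, hpW.1⟩
      have hsup : (insert p U).sup id = p := by
        apply le_antisymm
        · apply Finset.sup_le
          intro u hu
          rcases Finset.mem_insert.1 hu with rfl | hu
          · exact le_rfl
          · have := h6 _ hp u hu
            have := h1 u (h5 u hu)
            have : u ≠ n := by grind
            simp only [id]
            grind
        · exact Finset.le_sup (f := id) (Finset.mem_insert_self _ _)
      refine ⟨(W, E.erase (p, n), insert p U), ?_, by simp, by
        simp [_root_.addClose, hsup, Finset.insert_erase hp, Finset.erase_insert hpU]⟩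
      have hlt : ∀ e ∈ E, e ≠ (p, n) → e.2 < n := by
        intro e he hne
        have := h3 e he _ hp
        have := h2 e he
        grind
      constructor <;> simp only [Finset.mem_erase, Finset.mem_insert]
      · grind
      · grind
      · grind
      · grind
      · grind
      · rintro e ⟨hne, he⟩ u (rfl | hu)
        · have a := h3 e he _ hp
          have b := h4 e he _ hp
          have c := hlt e he hne
          grind
        · exact h6 e he u hu
    · left
      have : ∀ e ∈ E, e.2 ≠ n := by
        rintro ⟨p, q⟩ he rfl
        exact hE ⟨p, he⟩
      constructor <;> simp only <;> grind

theorem mem_configs {n : ℕ} {s : Config} : s ∈ configs n ↔ IsConfig n s := by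
  induction n generalizing s with
  | zero =>
    simp only [configs, Finset.mem_singleton]
    constructor
    · rintro rfl
      constructor <;> simp
    · obtain ⟨W, E, U⟩ := s
      rintro ⟨h1, h2, -, -, h5, -⟩
      have hW : W = ∅ := Finset.eq_empty_of_forall_notMem fun x hx => by simpa using h1 x hx
      have hE : E = ∅ := Finset.eq_empty_of_forall_notMem fun x hx => by simpa using (h2 x hx).2.1
      have hU : U = ∅ := Finset.eq_empty_of_forall_notMem fun x hx => by simpa [hW] using h5 x hx
      simp [hW, hE, hU]
  | succ n ih =>
    simp only [configs, Finset.mem_union, Finset.mem_image, Finset.mem_filter, ih]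
    constructor
    · rintro ((h | ⟨t, ⟨h, hU⟩, rfl⟩) | ⟨t, h, rfl⟩ | ⟨t, h, rfl⟩)
      exacts [h.succ, h.addClose hU, h.addWhite, h.addOpen]
    · intro h
      rcases h.cases_succ with h | ⟨t, h, hU, e⟩ | h | h
      exacts [.inl (.inl h), .inl (.inr ⟨t, ⟨h, hU⟩, e⟩), .inr (.inl h), .inr (.inr h)]

theorem IsConfig.notMem_white {n : ℕ} {s : Config} (h : IsConfig n s) : n ∉ s.1 :=
  fun hn => (h.white_lt n hn).false

theorem IsConfig.notMem_open {n : ℕ} {s : Config} (h : IsConfig n s) : n ∉ s.2.2 :=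
  fun hn => h.notMem_white (h.open_white n hn)

theorem IsConfig.notMem_edge {n : ℕ} {s : Config} (h : IsConfig n s) (p : ℕ) :
    (p, n) ∉ s.2.1 :=
  fun hn => (h.edge _ hn).2.1.false

theorem eq_of_insert_eq_insert {α : Type*} [DecidableEq α] {a : α} {s t : Finset α} (hs : a ∉ s)
    (ht : a ∉ t) (h : insert a s = insert a t) : s = t := by
  rw [← Finset.erase_insert hs, h, Finset.erase_insert ht]

theorem addWhite_injOn (n : ℕ) : Set.InjOn (addWhite n) {s | IsConfig n s} := by
  rintro ⟨W, E, U⟩ h ⟨W', E', U'⟩ h' e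
  simp only [addWhite, Prod.mk.injEq] at e ⊢
  exact ⟨eq_of_insert_eq_insert h.notMem_white h'.notMem_white e.1, e.2⟩

theorem addOpen_injOn (n : ℕ) : Set.InjOn (addOpen n) {s | IsConfig n s} := by
  rintro ⟨W, E, U⟩ h ⟨W', E', U'⟩ h' e
  simp only [addOpen, Prod.mk.injEq] at e ⊢
  exact ⟨eq_of_insert_eq_insert h.notMem_white h'.notMem_white e.1, e.2.1,
    eq_of_insert_eq_insert h.notMem_open h'.notMem_open e.2.2⟩

theorem addClose_injOn (n : ℕ) :
    Set.InjOn (addClose n) {s | IsConfig n s ∧ s.2.2.Nonempty} := by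
  rintro ⟨W, E, U⟩ ⟨h, hU⟩ ⟨W', E', U'⟩ ⟨h', hU'⟩ e
  simp only [addClose, Prod.mk.injEq] at e
  obtain ⟨e1, e2, e3⟩ := e
  have hE := h.notMem_edge
  have hE' := h'.notMem_edge
  have hp := sup_id_mem hU
  have hp' := sup_id_mem hU'
  simp only at hE hE' hp hp'
  have hpp : U.sup id = U'.sup id := by
    have : (U.sup id, n) ∈ insert (U'.sup id, n) E' := e2 ▸ Finset.mem_insert_self _ _
    rcases Finset.mem_insert.1 this with h | h
    · exact (Prod.mk.inj h).1
    · exact absurd h (hE' _)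
  rw [← hpp] at e2 e3 hp'
  rw [e1, eq_of_insert_eq_insert (hE _) (hE' _) e2,
    ← Finset.insert_erase hp, e3, Finset.insert_erase hp']

/-- The number of configurations with `i` white points, `j` edges and `h` open points. -/
def configCount (n i j h : ℕ) : ℕ :=
  ((configs n).filter fun s => s.1.card = i ∧ s.2.1.card = j ∧ s.2.2.card = h).card

theorem configCount_succ (n i j h : ℕ) :
    configCount (n + 1) i j h = configCount n i j h +
      ((configs n).filter fun s =>
        s.1.card = i ∧ s.2.1.card + 1 = j ∧ s.2.2.card = h + 1).card +
      (((configs n).filter fun s => s.1.card + 1 = i ∧ s.2.1.card = j ∧ s.2.2.card = h).card +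
      ((configs n).filter fun s =>
        s.1.card + 1 = i ∧ s.2.1.card = j ∧ s.2.2.card + 1 = h).card) := by
  have hsub : ∀ {s}, s ∈ configs n → IsConfig n s := fun h => mem_configs.1 h
  unfold configCount
  rw [configs, Finset.filter_union, Finset.filter_union, Finset.filter_union,
    Finset.card_union_of_disjoint, Finset.card_union_of_disjoint, Finset.card_union_of_disjoint,
    Finset.filter_image, Finset.filter_image, Finset.filter_image,
    Finset.card_image_of_injOn, Finset.card_image_of_injOn, Finset.card_image_of_injOn]
  · congr 1
    · congr 2
      ext s
      simp only [Finset.mem_filter, and_assoc]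
      refine and_congr_right fun hs => ?_
      have hs := hsub hs
      simp only [addClose, Finset.card_insert_of_notMem (hs.notMem_edge _)]
      constructor
      · rintro ⟨hU, h1, h2, h3⟩
        have := Finset.card_erase_add_one (sup_id_mem hU)
        omega
      · rintro ⟨h1, h2, h3⟩
        have hU : s.2.2.Nonempty := Finset.card_pos.1 (by omega)
        have := Finset.card_erase_add_one (sup_id_mem hU)
        exact ⟨hU, h1, h2, by omega⟩
    · congr 2
      · refine Finset.filter_congr fun s hs => ?_
        simp only [addWhite, Finset.card_insert_of_notMem (hsub hs).notMem_white]
      · refine Finset.filter_congr fun s hs => ?_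
        simp only [addOpen, Finset.card_insert_of_notMem (hsub hs).notMem_white,
          Finset.card_insert_of_notMem (hsub hs).notMem_open]
  · exact (addOpen_injOn n).mono fun s hs => hsub (Finset.mem_filter.1 hs).1
  · exact (addWhite_injOn n).mono fun s hs => hsub (Finset.mem_filter.1 hs).1
  · refine (addClose_injOn n).mono fun s hs => ?_
    have hs := Finset.mem_filter.1 (Finset.mem_filter.1 hs).1
    exact ⟨hsub hs.1, hs.2⟩
  · refine Finset.disjoint_filter_filter ?_
    simp only [Finset.disjoint_left, Finset.mem_image]
    rintro _ ⟨s, hs, rfl⟩ ⟨t, ht, e⟩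
    have : n ∈ (addWhite n s).2.2 := by rw [← e]; simp [addOpen]
    exact (hsub hs).notMem_open this
  · refine Finset.disjoint_filter_filter ?_
    simp only [Finset.disjoint_left, Finset.mem_image, Finset.mem_filter]
    rintro s hs ⟨t, ht, rfl⟩
    exact (hsub hs).notMem_edge (t.2.2.sup id) (Finset.mem_insert_self _ _)
  · rw [← Finset.filter_union, ← Finset.filter_union]
    refine Finset.disjoint_filter_filter ?_
    simp only [Finset.disjoint_left, Finset.mem_union, Finset.mem_image, Finset.mem_filter]
    intro s hs hs'
    have h1 : n ∉ s.1 := by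
      rcases hs with hs | ⟨t, ht, rfl⟩
      · exact (hsub hs).notMem_white
      · exact (hsub ht.1).notMem_white
    apply h1
    rcases hs' with ⟨t, -, rfl⟩ | ⟨t, -, rfl⟩
    exacts [Finset.mem_insert_self _ _, Finset.mem_insert_self _ _]

theorem configCount_eq (n i j h : ℕ) :
    configCount n i j h = ballot j h * n.choose (i + j) * (i + j).choose (2 * j + h) := by
  induction n generalizing i j h with
  | zero =>
    rcases i with _ | i <;> rcases j with _ | j <;> rcases h with _ | h <;>
      simp [configCount, configs, Finset.filter_singleton, ballot, ← add_assoc]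
  | succ n ih =>
    rw [configCount_succ]
    rcases i with _ | i <;> rcases j with _ | j <;> rcases h with _ | h <;>
      simp only [Nat.add_right_cancel_iff, Nat.add_eq_zero_iff, one_ne_zero, and_false, false_and,
        Finset.filter_false, Finset.card_empty, add_zero]
    all_goals simp only [← configCount.eq_1, ih, ballot]
    · simp
    · simp
    · simp (disch := omega) only [Nat.choose_eq_zero_of_lt, mul_zero, add_zero]
    · simp (disch := omega) only [Nat.choose_eq_zero_of_lt, mul_zero, add_zero]
    · simp [Nat.choose_succ_succ n i, add_comm]
    · rw [show 2 * 0 + (h + 1) = h + 1 by ring, show 2 * 0 + h = h by ring]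
      simp only [add_zero, Nat.choose_succ_succ n i, Nat.choose_succ_succ i h, Nat.succ_eq_add_one]
      ring
    · rw [show i + 1 + (j + 1) = i + j + 1 + 1 by ring, show i + 1 + j = i + j + 1 by ring,
        show i + (j + 1) = i + j + 1 by ring, show 2 * j + (0 + 1) = 2 * j + 1 by ring,
        show 2 * (j + 1) + 0 = 2 * j + 1 + 1 by ring, show 2 * (j + 1) = 2 * j + 1 + 1 by ring]
      simp only [Nat.choose_succ_succ n (i + j + 1), Nat.choose_succ_succ (i + j + 1) (2 * j + 1),
        Nat.succ_eq_add_one]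
      ring
    · rw [show i + 1 + (j + 1) = i + j + 1 + 1 by ring, show i + 1 + j = i + j + 1 by ring,
        show i + (j + 1) = i + j + 1 by ring,
        show 2 * j + (h + 1 + 1) = 2 * j + 2 + h by ring,
        show 2 * (j + 1) + h = 2 * j + 2 + h by ring,
        show 2 * (j + 1) + (h + 1) = 2 * j + 2 + h + 1 by ring]
      simp only [Nat.choose_succ_succ n (i + j + 1),
        Nat.choose_succ_succ (i + j + 1) (2 * j + 2 + h), Nat.succ_eq_add_one]
      ring

/-- The configuration without open points given by a choice and a set of edges. -/
def toConfig {n : ℕ} (p : (Fin n → Bool) × Finset (Fin n × Fin n)) : Config :=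
  ((Finset.univ.filter fun k => p.1 k = false).map Fin.valEmbedding,
    p.2.map (Fin.valEmbedding.prodMap Fin.valEmbedding), ∅)

theorem toConfig_injective (n : ℕ) : Function.Injective (toConfig (n := n)) := by
  rintro ⟨c, E⟩ ⟨c', E'⟩ h
  simp only [toConfig, Prod.mk.injEq, Finset.map_inj, and_true] at h ⊢
  refine ⟨funext fun k => ?_, h.2⟩
  have := congrArg (k ∈ ·) h.1
  simp only [Finset.mem_filter, Finset.mem_univ, true_and, eq_iff_iff] at this
  cases hc : c k <;> cases hc' : c' k <;> simp_all

theorem isConfig_toConfig {n : ℕ} (p : (Fin n → Bool) × Finset (Fin n × Fin n)) :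
    IsConfig n (toConfig p) ↔ IsContraction p.1 p.2 ∧ IsNoncrossing p.2 := by
  obtain ⟨c, E⟩ := p
  have hW : ∀ k : Fin n, (k : ℕ) ∈ (toConfig (c, E)).1 ↔ c k = false := by
    intro k
    simp [toConfig, Fin.val_inj]
  have hE : ∀ {P : ℕ × ℕ → Prop}, (∀ e ∈ (toConfig (c, E)).2.1, P e) ↔
      ∀ e ∈ E, P ((e.1 : ℕ), (e.2 : ℕ)) := by
    intro P
    simp only [toConfig, Finset.forall_mem_map]
    rfl
  constructor
  · rintro ⟨h1, h2, h3, h4, -, -⟩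
    simp only [hE, hW] at h2 h3 h4
    refine ⟨⟨fun e he => ?_, fun e he f hf hef => ?_⟩, fun e he f hf => ?_⟩
    · have := h2 e he
      exact ⟨this.1, this.2.2.1, by simpa using this.2.2.2⟩
    · have a := h2 e he
      have b := h2 f hf
      have d := h3 e he f hf
      grind
    · have a := h4 e he f hf
      have b := h4 f hf e he
      exact fun h => h.elim a b
  · rintro ⟨⟨h1, h2⟩, h3⟩
    constructor
    · intro x hx
      obtain ⟨k, -, rfl⟩ := Finset.mem_map.1 hx
      exact k.2
    · simp only [hE, hW]
      intro e he
      have := h1 e he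
      exact ⟨this.1, e.2.2, this.2.1, by simpa using this.2.2⟩
    · simp only [hE]
      intro e he f hf h
      have := h2 e he f hf
      grind
    · simp only [hE]
      intro e he f hf h
      exact h3 e he f hf (.inl h)
    · simp [toConfig]
    · simp [toConfig]

theorem exists_toConfig_eq {n : ℕ} {s : Config} (h : IsConfig n s) (hU : s.2.2 = ∅) :
    ∃ p, toConfig (n := n) p = s := by
  obtain ⟨W, E, U⟩ := s
  obtain rfl : U = ∅ := hU
  refine ⟨(fun k => decide ((k : ℕ) ∉ W),
    Finset.univ.filter fun e => ((e.1 : ℕ), (e.2 : ℕ)) ∈ E), ?_⟩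
  simp only [toConfig, Prod.mk.injEq, and_true]
  constructor
  · ext x
    simp only [Finset.mem_map, Finset.mem_filter, Finset.mem_univ, true_and]
    constructor
    · rintro ⟨k, hk, rfl⟩
      simpa using hk
    · intro hx
      exact ⟨⟨x, h.white_lt x hx⟩, by simpa using hx, rfl⟩
  · ext x
    simp only [Finset.mem_map, Finset.mem_filter, Finset.mem_univ, true_and]
    constructor
    · rintro ⟨k, hk, rfl⟩
      exact hk
    · intro hx
      have := h.edge x hx
      exact ⟨(⟨x.1, this.1.trans this.2.1⟩, ⟨x.2, this.2.1⟩), hx, rfl⟩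

theorem pairCountAA_eq_configCount (n i j : ℕ) : pairCountAA n j i = configCount n i j 0 := by
  rw [pairCountAA, configCount, ← Nat.card_eq_finsetCard]
  refine Nat.card_eq_of_bijective (fun p => ⟨toConfig p.1, ?_⟩) ⟨fun p q h => ?_, ?_⟩
  · obtain ⟨p, h1, h2, h3, h4⟩ := p
    simp only [Finset.mem_filter, mem_configs]
    exact ⟨(isConfig_toConfig p).2 ⟨h2, h3⟩, by simpa [toConfig] using h1,
      by simpa [toConfig] using h4, rfl⟩
  · exact Subtype.ext (toConfig_injective n (congrArg Subtype.val h))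
  · rintro ⟨s, hs⟩
    simp only [Finset.mem_filter, mem_configs] at hs
    obtain ⟨h, h1, h2, h3⟩ := hs
    obtain ⟨p, rfl⟩ := exists_toConfig_eq h (Finset.card_eq_zero.1 h3)
    have hp := (isConfig_toConfig p).1 h
    exact ⟨⟨p, by simpa [toConfig] using h1, hp.1, hp.2, by simpa [toConfig] using h2⟩, rfl⟩

theorem stmt8 (n i j : ℕ) (hji : j ≤ i) (hin : i ≤ n - j) :
    pairCountAA n j i = catalan j * Nat.choose n (i + j) * Nat.choose (i + j) (2 * j) := by
  rw [pairCountAA_eq_configCount, configCount_eq, ballot_zero_right, Nat.add_zero]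
end

section
/- For all integers n ≥ 0 and all 0 ≤ j ≤ i ≤ n, the number of pairs (c, E), where c : Fin n → Bool is a choice with exactly i indices k satisfying c k = false and E is a noncrossing contraction with exactly j edges of the word of (a + (a†)²)^n associated to c, satisfies (n+1) · #{such pairs} = C(n+1, j+1) · C(n−j, n−i) · C(2(n−i), j), where C denotes the binomial coefficient. -/
/-- `E` is a noncrossing contraction of the word `w`, and `S` is a set of letters `a` of `w` that
are neither matched nor covered by an edge of `E`. -/
structure IsOpenContraction (w : List Bool) (E : Finset (ℕ × ℕ)) (S : Finset ℕ) : Prop where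
  lt : ∀ e ∈ E, e.1 < e.2
  fst : ∀ e ∈ E, w[e.1]? = some false
  snd : ∀ e ∈ E, w[e.2]? = some true
  disj : ∀ e ∈ E, ∀ f ∈ E, e ≠ f → e.1 ≠ f.1 ∧ e.2 ≠ f.2
  noncrossing : ∀ e ∈ E, ∀ f ∈ E, ¬ (e.1 < f.1 ∧ f.1 < e.2 ∧ e.2 < f.2)
  isOpen : ∀ s ∈ S, w[s]? = some false
  uncovered : ∀ s ∈ S, ∀ e ∈ E, s < e.1 ∨ e.2 < s

/-- The open contractions of `w` with `j` edges and `h` open letters. -/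
def openContractions (w : List Bool) (j h : ℕ) : Set (Finset (ℕ × ℕ) × Finset ℕ) :=
  {x | IsOpenContraction w x.1 x.2 ∧ x.1.card = j ∧ x.2.card = h}

/-- The number of open contractions of the reversal of a word, by recursion on its letters. -/
def openCount : List Bool → ℕ → ℕ → ℕ
  | [], j, h => if j = 0 ∧ h = 0 then 1 else 0
  | false :: w, j, 0 => openCount w j 0
  | false :: w, j, h + 1 => openCount w j (h + 1) + openCount w j h
  | true :: w, 0, h => openCount w 0 h
  | true :: w, j + 1, h => openCount w (j + 1) h + openCount w j (h + 1)

theorem getElem?_concat_eq_some {w : List Bool} {x y : Bool} {i : ℕ} :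
    (w ++ [x])[i]? = some y ↔ w[i]? = some y ∨ (i = w.length ∧ y = x) := by
  grind

theorem lt_length_of_getElem? {w : List Bool} {y : Bool} {i : ℕ} (h : w[i]? = some y) :
    i < w.length := by
  grind

theorem sup_id_mem_s13 {S : Finset ℕ} (hS : S.Nonempty) : S.sup id ∈ S := by
  obtain ⟨s, hs, h⟩ := Finset.exists_mem_eq_sup S hS id
  exact h ▸ hs

namespace IsOpenContraction

variable {w : List Bool} {E : Finset (ℕ × ℕ)} {S : Finset ℕ}

theorem fst_lt (H : IsOpenContraction w E S) {e : ℕ × ℕ} (he : e ∈ E) : e.1 < w.length :=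
  lt_length_of_getElem? (H.fst e he)

theorem snd_lt (H : IsOpenContraction w E S) {e : ℕ × ℕ} (he : e ∈ E) : e.2 < w.length :=
  lt_length_of_getElem? (H.snd e he)

theorem isOpen_lt (H : IsOpenContraction w E S) {s : ℕ} (hs : s ∈ S) : s < w.length :=
  lt_length_of_getElem? (H.isOpen s hs)

theorem concat (H : IsOpenContraction w E S) (x : Bool) : IsOpenContraction (w ++ [x]) E S where
  lt := H.lt
  fst e he := getElem?_concat_eq_some.2 (.inl (H.fst e he))
  snd e he := getElem?_concat_eq_some.2 (.inl (H.snd e he))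
  disj := H.disj
  noncrossing := H.noncrossing
  isOpen s hs := getElem?_concat_eq_some.2 (.inl (H.isOpen s hs))
  uncovered := H.uncovered

theorem mono {E' : Finset (ℕ × ℕ)} {S' : Finset ℕ} (H : IsOpenContraction w E S) (hE : E' ⊆ E)
    (hS : S' ⊆ S) : IsOpenContraction w E' S' where
  lt e he := H.lt e (hE he)
  fst e he := H.fst e (hE he)
  snd e he := H.snd e (hE he)
  disj e he f hf := H.disj e (hE he) f (hE hf)
  noncrossing e he f hf := H.noncrossing e (hE he) f (hE hf)
  isOpen s hs := H.isOpen s (hS hs)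
  uncovered s hs e he := H.uncovered s (hS hs) e (hE he)

theorem of_concat {x : Bool} (H : IsOpenContraction (w ++ [x]) E S)
    (hE : ∀ e ∈ E, e.2 ≠ w.length) (hS : w.length ∉ S) : IsOpenContraction w E S where
  lt := H.lt
  fst e he := by
    have h1 := H.fst_lt he
    have h2 := H.snd_lt he
    have h3 := H.lt e he
    have h4 := hE e he
    have h5 := getElem?_concat_eq_some.1 (H.fst e he)
    simp at h1 h2
    rcases h5 with h | h
    · exact h
    · omega
  snd e he := (getElem?_concat_eq_some.1 (H.snd e he)).resolve_right fun h => hE e he h.1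
  disj := H.disj
  noncrossing := H.noncrossing
  isOpen s hs := (getElem?_concat_eq_some.1 (H.isOpen s hs)).resolve_right fun h => hS (h.1 ▸ hs)
  uncovered := H.uncovered

theorem insert_open (H : IsOpenContraction w E S) :
    IsOpenContraction (w ++ [false]) E (insert w.length S) :=
  { H.concat false with
    isOpen := by
      intro s hs
      rcases Finset.mem_insert.1 hs with rfl | hs
      · simp
      · exact (H.concat false).isOpen s hs
    uncovered := by
      intro s hs e he
      rcases Finset.mem_insert.1 hs with rfl | hs
      · exact .inr (H.snd_lt he)
      · exact H.uncovered s hs e he }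

/-- Joining the last open letter to a new letter `a†`. -/
theorem close (H : IsOpenContraction w E S) (hS : S.Nonempty) :
    IsOpenContraction (w ++ [true]) (insert (S.sup id, w.length) E) (S.erase (S.sup id)) := by
  have hm := sup_id_mem_s13 hS
  have hle : ∀ s ∈ S, s ≤ S.sup id := fun s hs => Finset.le_sup (f := id) hs
  generalize S.sup id = m at hm hle
  have hml := H.isOpen_lt hm
  have H' := H.concat true
  have hlt := fun e (he : e ∈ E) => H.snd_lt he
  constructor
  · simpa using ⟨hml, fun a b h => H.lt _ h⟩
  · have := H'.fst; have := H'.isOpen m hm; grind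
  · have := H'.snd; grind
  · have := H.disj; have := H.uncovered m hm; have := H.lt; grind
  · have := H.noncrossing; have := H.uncovered m hm; have := H.lt; grind
  · have := H'.isOpen; grind
  · have := H.uncovered; have := fun t (ht : t ∈ S) => H.isOpen_lt ht; grind

/-- Removing the edge that ends in the last letter, if its other end point becomes open. -/
theorem reopen {s : ℕ} (H : IsOpenContraction (w ++ [true]) E S) (hs : (s, w.length) ∈ E) :
    IsOpenContraction w (E.erase (s, w.length)) (insert s S) := by
  have hN : w.length ∉ S := fun h => by simpa using H.isOpen _ h
  have key : ∀ e ∈ E.erase (s, w.length), e.2 ≠ w.length := by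
    intro e he h
    rw [Finset.mem_erase] at he
    exact (H.disj e he.2 _ hs he.1).2 h
  have H' := (H.mono (Finset.erase_subset (s, w.length) E) subset_rfl).of_concat key hN
  have hsl := H.lt _ hs
  refine { H' with isOpen := ?_, uncovered := ?_ }
  · intro t ht
    rcases Finset.mem_insert.1 ht with rfl | ht
    · exact (getElem?_concat_eq_some.1 (H.fst _ hs)).resolve_right fun h => by simp at h
    · exact H'.isOpen t ht
  · intro t ht e he
    rcases Finset.mem_insert.1 ht with rfl | ht
    · have he' := Finset.mem_erase.1 he
      have h1 := H.noncrossing e he'.2 _ hs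
      have h2 := (H.disj e he'.2 _ hs he'.1).1
      have h3 := H'.snd_lt he
      have h4 : t ≠ e.2 := by
        rintro rfl
        have := H.snd _ he'.2
        rw [H.fst _ hs] at this
        simp at this
      simp only at h1 h2
      omega
    · exact H'.uncovered t ht e he

theorem open_lt {s : ℕ} (H : IsOpenContraction (w ++ [true]) E S) (hs : (s, w.length) ∈ E) {t : ℕ}
    (ht : t ∈ S) : t < s := by
  have h1 := H.uncovered t ht _ hs
  have h2 := H.isOpen_lt ht
  simp at h1 h2
  omega

end IsOpenContraction

theorem finite_openContractions (w : List Bool) (j h : ℕ) : (openContractions w j h).Finite := by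
  refine Set.Finite.subset (Finset.finite_toSet
    ((Finset.range w.length ×ˢ Finset.range w.length).powerset ×ˢ
      (Finset.range w.length).powerset)) ?_
  rintro ⟨E, S⟩ ⟨H, -⟩
  simp only [Finset.coe_product, Set.mem_prod, Finset.mem_coe, Finset.mem_powerset]
  refine ⟨fun e he => ?_, fun s hs => ?_⟩
  · simpa using ⟨H.fst_lt he, H.snd_lt he⟩
  · simpa using H.isOpen_lt hs

theorem ncard_openContractions_nil (j h : ℕ) :
    (openContractions [] j h).ncard = if j = 0 ∧ h = 0 then 1 else 0 := by
  have key : ∀ x ∈ openContractions [] j h, x = (∅, ∅) := by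
    rintro ⟨E, S⟩ ⟨H, -⟩
    refine Prod.ext (Finset.eq_empty_of_forall_notMem fun e he => ?_)
      (Finset.eq_empty_of_forall_notMem fun s hs => ?_)
    · simpa using H.fst_lt he
    · simpa using H.isOpen_lt hs
  split_ifs with hjh
  · obtain ⟨rfl, rfl⟩ := hjh
    rw [Set.ncard_eq_one]
    refine ⟨(∅, ∅), Set.eq_singleton_iff_unique_mem.2 ⟨⟨?_, rfl, rfl⟩, key⟩⟩
    constructor <;> simp
  · rw [Set.ncard_eq_zero ((finite_openContractions [] j h))]
    refine Set.eq_empty_of_forall_notMem fun x hx => hjh ?_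
    have := key x hx
    subst this
    exact ⟨hx.2.1.symm, hx.2.2.symm⟩

theorem ncard_split {α : Type*} {s : Set α} (hs : s.Finite) (p : α → Prop) :
    s.ncard = {x ∈ s | p x}.ncard + {x ∈ s | ¬ p x}.ncard := by
  rw [← Set.ncard_union_eq _ (hs.subset (Set.sep_subset _ _)) (hs.subset (Set.sep_subset _ _))]
  · congr 1
    ext x
    simp only [Set.mem_union, Set.mem_ofPred_eq]
    tauto
  · rw [Set.disjoint_left]
    rintro x ⟨-, h⟩ ⟨-, h'⟩
    exact h' h

theorem sep_concat_false (w : List Bool) (j h : ℕ) :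
    {x ∈ openContractions (w ++ [false]) j h | ¬ w.length ∈ x.2} = openContractions w j h := by
  ext ⟨E, S⟩
  constructor
  · rintro ⟨⟨H, hj, hh⟩, hN⟩
    refine ⟨H.of_concat (fun e he h => ?_) hN, hj, hh⟩
    have := H.snd e he
    simp [h] at this
  · rintro ⟨H, hj, hh⟩
    exact ⟨⟨H.concat _, hj, hh⟩, fun h => (H.isOpen_lt h).false⟩

theorem ncard_sep_concat_false (w : List Bool) (j h : ℕ) :
    {x ∈ openContractions (w ++ [false]) j (h + 1) | w.length ∈ x.2}.ncard =
      (openContractions w j h).ncard := by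
  symm
  refine Set.ncard_congr (fun x _ => (x.1, insert w.length x.2)) ?_ ?_ ?_
  · rintro ⟨E, S⟩ ⟨H, hj, hh⟩
    refine ⟨⟨H.insert_open, hj, ?_⟩, Finset.mem_insert_self _ _⟩
    have : w.length ∉ S := fun h => (H.isOpen_lt h).false
    simpa [this] using hh
  · rintro ⟨E, S⟩ ⟨E', S'⟩ ⟨H, -⟩ ⟨H', -⟩ heq
    have h1 : w.length ∉ S := fun h => (H.isOpen_lt h).false
    have h2 : w.length ∉ S' := fun h => (H'.isOpen_lt h).false
    simp only [Prod.mk.injEq] at heq ⊢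
    refine ⟨heq.1, ?_⟩
    rw [← Finset.erase_insert h1, heq.2, Finset.erase_insert h2]
  · rintro ⟨E, S⟩ ⟨⟨H, hj, hh⟩, hN⟩
    refine ⟨(E, S.erase w.length), ⟨?_, hj, ?_⟩, ?_⟩
    · refine (H.mono subset_rfl (Finset.erase_subset _ _)).of_concat (fun e he h => ?_)
        (Finset.notMem_erase _ _)
      have := H.snd e he
      simp [h] at this
    · simp only at hN hh ⊢
      rw [Finset.card_erase_of_mem hN, hh, Nat.add_sub_cancel]
    · simp only at hN ⊢
      rw [Finset.insert_erase hN]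

theorem sep_concat_true (w : List Bool) (j h : ℕ) :
    {x ∈ openContractions (w ++ [true]) j h | ¬ ∃ e ∈ x.1, e.2 = w.length} =
      openContractions w j h := by
  ext ⟨E, S⟩
  constructor
  · rintro ⟨⟨H, hj, hh⟩, hN⟩
    refine ⟨H.of_concat (fun e he h => hN ⟨e, he, h⟩) fun h => ?_, hj, hh⟩
    simpa using H.isOpen _ h
  · rintro ⟨H, hj, hh⟩
    exact ⟨⟨H.concat _, hj, hh⟩, fun ⟨e, he, h⟩ => (H.snd_lt he).ne h⟩

theorem ncard_sep_concat_true (w : List Bool) (j h : ℕ) :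
    {x ∈ openContractions (w ++ [true]) (j + 1) h | ∃ e ∈ x.1, e.2 = w.length}.ncard =
      (openContractions w j (h + 1)).ncard := by
  have hnot : ∀ {E S}, IsOpenContraction w E S → ∀ s, (s, w.length) ∉ E :=
    fun H s hs => (H.snd_lt hs).false
  symm
  refine Set.ncard_congr
    (fun x _ => (insert (x.2.sup id, w.length) x.1, x.2.erase (x.2.sup id))) ?_ ?_ ?_
  · rintro ⟨E, S⟩ ⟨H, hj, hh⟩
    have hS : S.Nonempty := by
      rw [← Finset.card_pos]
      simp only at hh
      omega
    refine ⟨⟨H.close hS, ?_, ?_⟩, _, Finset.mem_insert_self _ _, rfl⟩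
    · simp only at hj ⊢
      rw [Finset.card_insert_of_notMem (hnot H _), hj]
    · simp only at hh ⊢
      rw [Finset.card_erase_of_mem (sup_id_mem_s13 hS), hh, Nat.add_sub_cancel]
  · rintro ⟨E, S⟩ ⟨E', S'⟩ ⟨H, -, hh⟩ ⟨H', -, hh'⟩ heq
    have hS : S.Nonempty := by
      rw [← Finset.card_pos]
      simp only at hh
      omega
    have hS' : S'.Nonempty := by
      rw [← Finset.card_pos]
      simp only at hh'
      omega
    have hm := sup_id_mem_s13 hS
    have hm' := sup_id_mem_s13 hS'
    simp only [Prod.mk.injEq] at heq H H' ⊢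
    obtain ⟨h1, h2⟩ := heq
    have h3 : S.sup id = S'.sup id := by
      have : (S.sup id, w.length) ∈ insert (S'.sup id, w.length) E' :=
        h1 ▸ Finset.mem_insert_self _ _
      simpa [hnot H'] using this
    rw [h3] at h1 h2 hm
    constructor
    · rw [← Finset.erase_insert (hnot H (S'.sup id)), h1, Finset.erase_insert (hnot H' _)]
    · rw [← Finset.insert_erase hm, h2, Finset.insert_erase hm']
  · rintro ⟨E, S⟩ ⟨⟨H, hj, hh⟩, ⟨s, t⟩, hs, ht⟩
    simp only at ht hs
    subst ht
    have hlt : ∀ t ∈ S, t < s := fun t ht => H.open_lt hs ht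
    have hsS : s ∉ S := fun h => (hlt s h).false
    have hsup : (insert s S).sup id = s := by
      refine le_antisymm (Finset.sup_le fun t ht => ?_)
        (Finset.le_sup (f := id) (Finset.mem_insert_self s S))
      rcases Finset.mem_insert.1 ht with rfl | ht
      · exact le_rfl
      · exact (hlt t ht).le
    refine ⟨(E.erase (s, w.length), insert s S), ⟨H.reopen hs, ?_, ?_⟩, ?_⟩
    · simp only at hj ⊢
      rw [Finset.card_erase_of_mem hs, hj, Nat.add_sub_cancel]
    · simp only at hh ⊢
      rw [Finset.card_insert_of_notMem hsS, hh]
    · simp only [hsup, Finset.insert_erase hs, Finset.erase_insert hsS]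

theorem ncard_openContractions (w : List Bool) (j h : ℕ) :
    (openContractions w j h).ncard = openCount w.reverse j h := by
  induction w using List.reverseRecOn generalizing j h with
  | nil => simp [openCount, ncard_openContractions_nil]
  | append_singleton w x ih =>
    have hfin := finite_openContractions (w ++ [x]) j h
    rw [List.reverse_append, List.reverse_singleton, List.singleton_append]
    cases x with
    | false =>
      rw [ncard_split hfin fun x => w.length ∈ x.2, sep_concat_false]
      cases h with
      | zero =>
        have : {x ∈ openContractions (w ++ [false]) j 0 | w.length ∈ x.2} = ∅ := by
          refine Set.eq_empty_of_forall_notMem ?_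
          rintro ⟨E, S⟩ ⟨⟨-, -, hS⟩, hN⟩
          simp only [Finset.card_eq_zero] at hS hN
          simp [hS] at hN
        rw [this, Set.ncard_empty, zero_add, ih, openCount]
      | succ h => rw [ncard_sep_concat_false, ih, ih, openCount, add_comm]
    | true =>
      rw [ncard_split hfin fun x => ∃ e ∈ x.1, e.2 = w.length, sep_concat_true]
      cases j with
      | zero =>
        have : {x ∈ openContractions (w ++ [true]) 0 h | ∃ e ∈ x.1, e.2 = w.length} = ∅ := by
          refine Set.eq_empty_of_forall_notMem ?_
          rintro ⟨E, S⟩ ⟨⟨-, hE, -⟩, e, he, -⟩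
          simp only [Finset.card_eq_zero] at hE he
          simp [hE] at he
        rw [this, Set.ncard_empty, zero_add, ih, openCount]
      | succ j => rw [ncard_sep_concat_true, ih, ih, openCount, add_comm]

theorem ncCount_get (w : List Bool) (j : ℕ) : ncCount w.get j = openCount w.reverse j 0 := by
  rw [← ncard_openContractions, ncCount, ← Set.coe_ofPred, Nat.card_coe_set_eq]
  let φ : Fin w.length × Fin w.length ↪ ℕ × ℕ := Fin.valEmbedding.prodMap Fin.valEmbedding
  have hφ : ∀ e, φ e = (e.1.val, e.2.val) := fun e => rfl
  refine Set.ncard_congr (fun E _ => (E.map φ, ∅)) ?_ ?_ ?_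
  · rintro E ⟨⟨h1, h2⟩, h3, h4⟩
    refine ⟨⟨?_, ?_, ?_, ?_, ?_, by simp, by simp⟩, by simpa using h4, rfl⟩
    · intro e he
      obtain ⟨e, he', rfl⟩ := Finset.mem_map.1 he
      exact (h1 e he').1
    · intro e he
      obtain ⟨e, he', rfl⟩ := Finset.mem_map.1 he
      have := (h1 e he').2.1
      simpa [hφ] using this
    · intro e he
      obtain ⟨e, he', rfl⟩ := Finset.mem_map.1 he
      have := (h1 e he').2.2
      simpa [hφ] using this
    · intro e he f hf hne
      obtain ⟨e, he', rfl⟩ := Finset.mem_map.1 he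
      obtain ⟨f, hf', rfl⟩ := Finset.mem_map.1 hf
      have := h2 e he' f hf' fun h => hne (h ▸ rfl)
      simp only [hφ, ne_eq, Fin.val_inj]
      exact ⟨this.1, this.2.2.2⟩
    · intro e he f hf hc
      obtain ⟨e, he', rfl⟩ := Finset.mem_map.1 he
      obtain ⟨f, hf', rfl⟩ := Finset.mem_map.1 hf
      exact h3 e he' f hf' (.inl hc)
  · intro E E' _ _ h
    exact Finset.map_injective φ (Prod.ext_iff.1 h).1
  · rintro ⟨E, S⟩ ⟨H, hj, hS⟩
    simp only [Finset.card_eq_zero] at hj hS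
    subst hS
    have hmap : (Finset.univ.filter fun e => φ e ∈ E).map φ = E := by
      ext e
      simp only [Finset.mem_map, Finset.mem_filter, Finset.mem_univ, true_and]
      constructor
      · rintro ⟨e, he, rfl⟩
        exact he
      · intro he
        exact ⟨(⟨e.1, H.fst_lt he⟩, ⟨e.2, H.snd_lt he⟩), he, rfl⟩
    refine ⟨Finset.univ.filter fun e => φ e ∈ E, ⟨⟨?_, ?_⟩, ?_, ?_⟩, by simp only [hmap]⟩
    · intro e he
      have he := (Finset.mem_filter.1 he).2
      refine ⟨H.lt _ he, ?_, ?_⟩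
      · simpa [hφ] using H.fst _ he
      · simpa [hφ] using H.snd _ he
    · intro e he f hf hne
      have he := (Finset.mem_filter.1 he).2
      have hf := (Finset.mem_filter.1 hf).2
      have h1 := H.disj _ he _ hf fun h => hne (φ.injective h)
      have h2 := H.fst _ he
      have h3 := H.snd _ he
      have h4 := H.fst _ hf
      have h5 := H.snd _ hf
      simp only [hφ, ne_eq, Fin.val_inj] at h1 h2 h3 h4 h5
      refine ⟨h1.1, fun h => ?_, fun h => ?_, h1.2⟩
      · rw [h, h5] at h2
        simp at h2
      · rw [h, h4] at h3
        simp at h3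
    · intro e he f hf hc
      have he := (Finset.mem_filter.1 he).2
      have hf := (Finset.mem_filter.1 hf).2
      rcases hc with hc | hc
      · exact H.noncrossing _ he _ hf hc
      · exact H.noncrossing _ hf _ he hc
    · rw [← hj, ← Finset.card_map φ, hmap]

/-- The number of pairs of a choice for `(a + (a†)²)^n` with `i` letters `a` and an open
contraction of its word with `j` edges and `h` open letters. -/
def pairOpenCount (n i j h : ℕ) : ℕ :=
  ∑ c : Fin n → Bool,
    if (List.ofFn c).count false = i then openCount (wordChoiceAS 2 c).reverse j h else 0

theorem pairCountAS_two (n j i : ℕ) : pairCountAS 2 n j i = pairOpenCount n i j 0 := by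
  let e : {p : Σ c : Fin n → Bool,
      Finset (Fin (wordChoiceAS 2 c).length × Fin (wordChoiceAS 2 c).length) //
    (Finset.univ.filter (fun k => p.1 k = false)).card = i ∧
    IsContraction (wordChoiceAS 2 p.1).get p.2 ∧ IsNoncrossing p.2 ∧ p.2.card = j} ≃
      Σ c : Fin n → Bool,
        {E : Finset (Fin (wordChoiceAS 2 c).length × Fin (wordChoiceAS 2 c).length) //
          (Finset.univ.filter (fun k => c k = false)).card = i ∧
          IsContraction (wordChoiceAS 2 c).get E ∧ IsNoncrossing E ∧ E.card = j} :=
    { toFun := fun p => ⟨p.1.1, p.1.2, p.2⟩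
      invFun := fun p => ⟨⟨p.1, p.2.1⟩, p.2.2⟩
      left_inv := fun _ => rfl
      right_inv := fun _ => rfl }
  rw [pairCountAS, Nat.card_congr e, Nat.card_sigma, pairOpenCount]
  refine Finset.sum_congr rfl fun c _ => ?_
  have hcount : (List.ofFn c).count false = (Finset.univ.filter (fun k => c k = false)).card := by
    simpa using
      (Fin.card_filter_univ_eq_vector_get_eq_count false (List.Vector.ofFn c)).symm
  rw [hcount]
  split_ifs with h
  · simp only [h, true_and]
    exact ncCount_get _ _
  · simp [h]

theorem pairOpenCount_zero (i j h : ℕ) :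
    pairOpenCount 0 i j h = if i = 0 ∧ j = 0 ∧ h = 0 then 1 else 0 := by
  simp [pairOpenCount, wordChoiceAS, openCount, eq_comm, ite_and]

theorem openCount_true_true (w : List Bool) (j h : ℕ) :
    openCount (true :: true :: w) j h = openCount w j h +
      (if j = 0 then 0 else 2 * openCount w (j - 1) (h + 1)) +
      (if j ≤ 1 then 0 else openCount w (j - 2) (h + 2)) := by
  rcases j with _ | _ | j <;> simp [openCount] <;> ring

theorem openCount_false (w : List Bool) (j h : ℕ) :
    openCount (false :: w) j h = openCount w j h +
      (if h = 0 then 0 else openCount w j (h - 1)) := by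
  rcases h with _ | h <;> simp [openCount]

theorem sum_snoc (n : ℕ) (f : (Fin (n + 1) → Bool) → ℕ) :
    ∑ c, f c = ∑ c : Fin n → Bool, f (Fin.snoc c false) +
      ∑ c : Fin n → Bool, f (Fin.snoc c true) := by
  rw [← (Fin.snocEquiv fun _ => Bool).sum_comp, Fintype.sum_prod_type, Fintype.sum_bool, add_comm]
  rfl

theorem ofFn_snoc {n : ℕ} (c : Fin n → Bool) (x : Bool) :
    List.ofFn (Fin.snoc c x : Fin (n + 1) → Bool) = List.ofFn c ++ [x] := by
  rw [List.ofFn_succ', List.concat_eq_append]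
  simp

theorem reverse_wordChoiceAS_snoc_false {n : ℕ} (c : Fin n → Bool) :
    (wordChoiceAS 2 (Fin.snoc c false : Fin (n + 1) → Bool)).reverse =
      false :: (wordChoiceAS 2 c).reverse := by
  rw [wordChoiceAS, wordChoiceAS, ofFn_snoc]
  simp

theorem reverse_wordChoiceAS_snoc_true {n : ℕ} (c : Fin n → Bool) :
    (wordChoiceAS 2 (Fin.snoc c true : Fin (n + 1) → Bool)).reverse =
      true :: true :: (wordChoiceAS 2 c).reverse := by
  rw [wordChoiceAS, wordChoiceAS, ofFn_snoc]
  simp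

/-- Classification of the choices by their last block. -/
theorem pairOpenCount_succ (n i j h : ℕ) :
    pairOpenCount (n + 1) i j h =
      (if i = 0 then 0 else pairOpenCount n (i - 1) j h) +
      (if i = 0 ∨ h = 0 then 0 else pairOpenCount n (i - 1) j (h - 1)) +
      pairOpenCount n i j h +
      (if j = 0 then 0 else 2 * pairOpenCount n i (j - 1) (h + 1)) +
      (if j ≤ 1 then 0 else pairOpenCount n i (j - 2) (h + 2)) := by
  have hfalse : ∀ c : Fin n → Bool,
      (if (List.ofFn (Fin.snoc c false : Fin (n + 1) → Bool)).count false = i then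
        openCount (wordChoiceAS 2 (Fin.snoc c false : Fin (n + 1) → Bool)).reverse j h else 0) =
      (if i = 0 then 0 else if (List.ofFn c).count false = i - 1 then
        openCount (wordChoiceAS 2 c).reverse j h else 0) +
      (if i = 0 ∨ h = 0 then 0 else if (List.ofFn c).count false = i - 1 then
        openCount (wordChoiceAS 2 c).reverse j (h - 1) else 0) := by
    intro c
    rw [reverse_wordChoiceAS_snoc_false, openCount_false, ofFn_snoc]
    rcases i with _ | i <;> rcases h with _ | h <;> simp [← ite_add_zero]
  have htrue : ∀ c : Fin n → Bool,
      (if (List.ofFn (Fin.snoc c true : Fin (n + 1) → Bool)).count false = i then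
        openCount (wordChoiceAS 2 (Fin.snoc c true : Fin (n + 1) → Bool)).reverse j h else 0) =
      (if (List.ofFn c).count false = i then openCount (wordChoiceAS 2 c).reverse j h else 0) +
      (if j = 0 then 0 else 2 * if (List.ofFn c).count false = i then
        openCount (wordChoiceAS 2 c).reverse (j - 1) (h + 1) else 0) +
      (if j ≤ 1 then 0 else if (List.ofFn c).count false = i then
        openCount (wordChoiceAS 2 c).reverse (j - 2) (h + 2) else 0) := by
    intro c
    rw [reverse_wordChoiceAS_snoc_true, openCount_true_true, ofFn_snoc]
    by_cases hc : (List.ofFn c).count false = i <;> simp [hc]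
  have hpull : ∀ (p : Prop) [Decidable p] (f : (Fin n → Bool) → ℕ),
      ∑ c, (if p then 0 else f c) = if p then 0 else ∑ c, f c := by
    intro p _ f
    split_ifs <;> simp
  rw [pairOpenCount, sum_snoc]
  simp only [hfalse, htrue, Finset.sum_add_distrib, hpull, ← Finset.mul_sum]
  simp only [pairOpenCount]
  ring

theorem pairOpenCount_eq_zero_of_lt {n i : ℕ} (hi : n < i) (j h : ℕ) :
    pairOpenCount n i j h = 0 := by
  refine Finset.sum_eq_zero fun c _ => if_neg fun hc => ?_
  have := List.count_le_length (a := false) (l := List.ofFn c)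
  rw [hc, List.length_ofFn] at this
  omega

theorem pairOpenCount_eq_zero_of_lt_add {n i j h : ℕ} (hi : i < j + h) :
    pairOpenCount n i j h = 0 := by
  induction n generalizing i j h with
  | zero => rw [pairOpenCount_zero, if_neg (by omega)]
  | succ n ih =>
    rw [pairOpenCount_succ, ih hi]
    split_ifs <;> simp (disch := omega) only [ih]

theorem choose_block_identity (b j h : ℕ) :
    (b + 1) * ((h + 1) * (2 * b).choose j +
      (if j = 0 then 0 else 2 * ((h + 2) * (2 * b).choose (j - 1))) +
      (if j ≤ 1 then 0 else (h + 3) * (2 * b).choose (j - 2))) =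
    ((b + 1) * (h + 1) + j) * (2 * (b + 1)).choose j := by
  rcases j with _ | _ | j
  · simp
  · simp
    ring
  · have h1 : (2 * (b + 1)).choose (j + 2) =
        (2 * b).choose j + 2 * (2 * b).choose (j + 1) + (2 * b).choose (j + 2) := by
      rw [show 2 * (b + 1) = 2 * b + 1 + 1 by ring, Nat.choose_succ_succ', Nat.choose_succ_succ',
        Nat.choose_succ_succ' (2 * b) (j + 1)]
      ring
    have h2 := Nat.add_one_mul_choose_eq (2 * b + 1) (j + 1)
    rw [Nat.choose_succ_succ' (2 * b) j, show 2 * b + 1 + 1 = 2 * (b + 1) by ring,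
      show j + 1 + 1 = j + 2 by ring, h1] at h2
    simp only [show j + 1 + 1 = j + 2 by ring, h1]
    simp
    linarith

/-- The weighted ballot formula for open contractions. -/
theorem pairOpenCount_mul_factorial (u b j h : ℕ) :
    pairOpenCount (u + (j + h) + b) (u + (j + h)) j h *
        ((j + h + 1).factorial * u.factorial * b.factorial) =
      (h + 1) * (u + (j + h) + b).factorial * (2 * b).choose j := by
  generalize hn : u + (j + h) + b = n
  induction n generalizing u b j h with
  | zero =>
    obtain ⟨rfl, rfl, rfl, rfl⟩ : u = 0 ∧ j = 0 ∧ h = 0 ∧ b = 0 := by omega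
    simp [pairOpenCount_zero]
  | succ n ih =>
    set i := u + (j + h) with hi
    set D := (j + h + 1).factorial * u.factorial * b.factorial with hD
    have h1 : (if i = 0 then 0 else pairOpenCount n (i - 1) j h) * D =
        u * (h + 1) * n.factorial * (2 * b).choose j := by
      rcases u with _ | u
      · split_ifs with hi0
        · simp
        · rw [pairOpenCount_eq_zero_of_lt_add (by omega)]
          simp
      · have := ih u b j h (by omega)
        rw [if_neg (by omega), show i - 1 = u + (j + h) by omega, hD, Nat.factorial_succ u]
        linear_combination (u + 1) * this
    have h2 : (if i = 0 ∨ h = 0 then 0 else pairOpenCount n (i - 1) j (h - 1)) * D =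
        (j + h + 1) * h * n.factorial * (2 * b).choose j := by
      rcases h with _ | h
      · simp
      · have := ih u b j h (by omega)
        rw [if_neg (by omega), show i - 1 = u + (j + h) by omega, hD, Nat.add_sub_cancel,
          show j + (h + 1) + 1 = j + h + 1 + 1 by ring, Nat.factorial_succ (j + h + 1)]
        linear_combination (j + h + 2) * this
    have h3 : (pairOpenCount n i j h +
        (if j = 0 then 0 else 2 * pairOpenCount n i (j - 1) (h + 1)) +
        (if j ≤ 1 then 0 else pairOpenCount n i (j - 2) (h + 2))) * D =
        (b * (h + 1) + j) * n.factorial * (2 * b).choose j := by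
      rcases b with _ | b
      · have hz := pairOpenCount_eq_zero_of_lt (n := n) (i := i) (by omega)
        rcases j with _ | j <;> simp [hz]
      · have e1 := ih u b j h (by omega)
        have e2 : (if j = 0 then 0 else 2 * pairOpenCount n i (j - 1) (h + 1)) *
            ((j + h + 1).factorial * u.factorial * b.factorial) =
            n.factorial * (if j = 0 then 0 else 2 * ((h + 2) * (2 * b).choose (j - 1))) := by
          split_ifs with hj
          · simp
          · have := ih u b (j - 1) (h + 1) (by omega)
            rw [show j - 1 + (h + 1) = j + h by omega] at this
            linear_combination 2 * this
        have e3 : (if j ≤ 1 then 0 else pairOpenCount n i (j - 2) (h + 2)) *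
            ((j + h + 1).factorial * u.factorial * b.factorial) =
            n.factorial * (if j ≤ 1 then 0 else (h + 3) * (2 * b).choose (j - 2)) := by
          split_ifs with hj
          · simp
          · have := ih u b (j - 2) (h + 2) (by omega)
            rw [show j - 2 + (h + 2) = j + h by omega] at this
            linear_combination this
        have e4 := choose_block_identity b j h
        rw [hD, Nat.factorial_succ b]
        linear_combination (b + 1) * (e1 + e2 + e3) + n.factorial * e4
    rw [pairOpenCount_succ, Nat.factorial_succ n]
    have hn' : n + 1 = u + (j + h) + b := by omega
    rw [hn']
    linear_combination h1 + h2 + h3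

theorem stmt13 (n i j : ℕ) (hji : j ≤ i) (hin : i ≤ n) :
    (n + 1) * pairCountAS 2 n j i
      = Nat.choose (n + 1) (j + 1) * Nat.choose (n - j) (n - i)
          * Nat.choose (2 * (n - i)) j := by
  obtain ⟨u, rfl⟩ := Nat.exists_eq_add_of_le' hji
  obtain ⟨b, rfl⟩ := Nat.exists_eq_add_of_le hin
  have key := pairOpenCount_mul_factorial u b j 0
  have h1 := Nat.choose_mul_factorial_mul_factorial (show j + 1 ≤ u + j + b + 1 by omega)
  have h2 := Nat.choose_mul_factorial_mul_factorial (show b ≤ u + b by omega)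
  rw [show u + j + b + 1 - (j + 1) = u + b by omega, Nat.factorial_succ (u + j + b)] at h1
  rw [Nat.add_sub_cancel] at h2
  rw [pairCountAS_two, show u + j + b - (u + j) = b by omega, show u + j + b - j = u + b by omega]
  simp only [add_zero, zero_add, one_mul] at key
  have hpos : 0 < (j + 1).factorial * u.factorial * b.factorial := by positivity
  refine Nat.eq_of_mul_eq_mul_right hpos ?_
  linear_combination (u + j + b + 1) * key - (2 * b).choose j * h1 -
    (u + j + b + 1).choose (j + 1) * (2 * b).choose j * (j + 1).factorial * h2
end
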